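/- arXiv:1204.4694 — 2 statements merged into one kernel-verified Lean document; each statement's English description precedes it below -/
import Mathlib

section
/- Suppose φ : D → D is a C^∞ area-preserving diffeomorphism of the closed unit disk which is the uniform (C⁰) limit of a sequence of maps φ_k = g_k⁻¹ ∘ R_{2π p_k/q_k} ∘ g_k, where each g_k : D → D is an orientation-preserving C^∞ diffeomorphism fixing the origin and the rationals p_k/q_k converge to an irrational real number. Then φ has precisely one periodic point, namely the origin; in particular φ is an irrational pseudo-rotation. -/
/-!
Every iterate `ψ` of `φ` is again a limit of conjugates of rotations, by angles tending to an
irrational multiple of `2π`, so it suffices to rule out fixed points of `ψ` other than the center.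

* On the boundary circle, the lift of `g_k⁻¹ ∘ R ∘ g_k` is conjugate to a translation. A fixed point
  of `ψ` keeps long orbits of this lift within a period, so the translation would be trivial.
* A fixed point in the interior at which `Dψ` does not have the eigenvalue `1` persists under
  `C⁰`-small perturbations, because an odd map of the circle to `ℂ \ {0}` has nonzero winding
  number. But the conjugates of rotations fix only the center.
* If `Dψ` has the eigenvalue `1` at an interior fixed point `z`, it is unipotent since its
  determinant is `1`. After a Möbius map has moved `z` to the center of the disk, `ψ` lifts to the
  half-plane covering of the punctured disk. Near the puncture every iterate of the lift turns by at
  most half a turn, while on the boundary the total rotation grows without bound. Hence a high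
  iterate, composed with a deck transformation, is a fixed point free twist of a strip, as in the
  Poincaré–Birkhoff theorem. Slow spirals from `g_k z` out to the circle and back are pulled back by
  `g_k` to pseudo-orbits of the twist that cross the strip in both directions. The total turning of
  the displacement along such a curve is determined by its endpoints (Hopf's chord trick), and the
  two directions give different values.
-/

open Complex Metric Filter Set

/-- The closed unit disk in `ℂ ≅ ℝ²`. -/
def Disk : Set ℂ := Metric.closedBall 0 1

/-- A `C^∞`-smooth diffeomorphism of the closed unit disk: a bijection of `Disk`
which is `C^∞` up to the boundary together with its inverse. -/
structure SmoothDiskDiffeo where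
  toFun : ℂ → ℂ
  invFun : ℂ → ℂ
  mapsTo : Set.MapsTo toFun Disk Disk
  mapsTo_inv : Set.MapsTo invFun Disk Disk
  left_inv : ∀ z ∈ Disk, invFun (toFun z) = z
  right_inv : ∀ z ∈ Disk, toFun (invFun z) = z
  smooth : ContDiffOn ℝ (⊤ : ℕ∞) toFun Disk
  smooth_inv : ContDiffOn ℝ (⊤ : ℕ∞) invFun Disk

/-- `φ` preserves the area form `dx ∧ dy`, i.e. `det Dφ ≡ 1` on the disk. -/
def AreaPreserving (φ : SmoothDiskDiffeo) : Prop :=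
  ∀ z ∈ Disk, (fderivWithin ℝ φ.toFun Disk z).det = 1

/-- `φ` is orientation preserving: `det Dφ > 0` everywhere on the disk. -/
def OrientationPreserving (φ : SmoothDiskDiffeo) : Prop :=
  ∀ z ∈ Disk, 0 < (fderivWithin ℝ φ.toFun Disk z).det

open scoped Topology Real ComplexConjugate

/-! ### Continuous logarithms -/

theorem exists_continuousOn_exp_eq {E : Type*} [NormedAddCommGroup E] [NormedSpace ℝ E]
    {s : Set E} (hs : Convex ℝ s) {f : E → ℂ} (hf : ContinuousOn f s) (hf0 : ∀ x ∈ s, f x ≠ 0) :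
    ∃ L : E → ℂ, ContinuousOn L s ∧ ∀ x ∈ s, exp (L x) = f x := by
  classical
  rcases s.eq_empty_or_nonempty with rfl | ⟨x₀, hx₀⟩
  · exact ⟨0, continuousOn_empty _, by simp⟩
  have hmem (p : unitInterval × s) : x₀ + (p.1 : ℝ) • ((p.2 : E) - x₀) ∈ s :=
    hs.add_smul_sub_mem hx₀ p.2.2 p.1.2
  let H : C(unitInterval × s, {z : ℂ // z ≠ 0}) :=
    ⟨fun p => ⟨f (x₀ + (p.1 : ℝ) • ((p.2 : E) - x₀)), hf0 _ (hmem p)⟩,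
      (hf.comp_continuous (by fun_prop) hmem).subtype_mk _⟩
  have hH0 (x : s) : H (0, x) = ⟨_, exp_ne_zero (ContinuousMap.const s (log (f x₀)) x)⟩ :=
    Subtype.ext (by simp [H, exp_log (hf0 x₀ hx₀)])
  obtain ⟨G, hG⟩ : ∃ G : C(unitInterval × s, ℂ), ∀ p, exp (G p) = H p :=
    ⟨isCoveringMap_exp.liftHomotopy H (.const s (log (f x₀))) hH0, fun p =>
      congrArg Subtype.val (congrFun (isCoveringMap_exp.liftHomotopy_lifts H _ hH0) p)⟩
  refine ⟨fun x => if hx : x ∈ s then G (1, ⟨x, hx⟩) else 0, ?_, fun x hx => ?_⟩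
  · rw [continuousOn_iff_continuous_domRestrict]
    have hrestrict : s.domRestrict (fun x => if hx : x ∈ s then G (1, ⟨x, hx⟩) else 0) =
        fun x : s => G (1, x) := by
      ext x
      simp [Set.domRestrict]
    rw [hrestrict]
    fun_prop
  · simp [hx, hG, H]

theorem exists_int_eqOn_of_exp_eqOn {X : Type*} [TopologicalSpace X] {s : Set X}
    (hs : IsPreconnected s) {L V : X → ℂ} (hL : ContinuousOn L s) (hV : ContinuousOn V s)
    (h : ∀ x ∈ s, exp (L x) = exp (V x)) : ∃ n : ℤ, ∀ x ∈ s, L x = V x + n * (2 * π * I) := by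
  rcases s.eq_empty_or_nonempty with rfl | ⟨x₀, hx₀⟩
  · exact ⟨0, by simp⟩
  obtain ⟨n, hn⟩ := exp_eq_exp_iff_exists_int.1 (h x₀ hx₀)
  refine ⟨n, isCoveringMap_exp.eqOn_of_comp_eqOn hs hL (hV.add_const _) (fun x hx => ?_) hx₀ hn⟩
  exact Subtype.ext (by simp [h x hx, exp_add, exp_int_mul_two_pi_mul_I])

theorem exists_int_im_eq_arg_add {X : Type*} [TopologicalSpace X] {s : Set X}
    (hs : IsPreconnected s) {L : X → ℂ} (hL : ContinuousOn L s)
    (h : ∀ x ∈ s, exp (L x) ∈ slitPlane) :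
    ∃ n : ℤ, ∀ x ∈ s, (L x).im = arg (exp (L x)) + 2 * π * n := by
  obtain ⟨n, hn⟩ := exists_int_eqOn_of_exp_eqOn hs hL
    ((continuous_exp.comp_continuousOn hL).clog h) fun _ _ => (exp_log (exp_ne_zero _)).symm
  refine ⟨n, fun x hx => ?_⟩
  have := congrArg im (hn x hx)
  simp only [Function.comp_apply, add_im, log_im, mul_im, mul_re, intCast_re, intCast_im, re_ofNat,
    im_ofNat, ofReal_re, ofReal_im, I_re, I_im] at this
  linarith

theorem exp_mem_slitPlane_of_re_nonneg {z : ℂ} (h : 0 ≤ (exp z).re) : exp z ∈ slitPlane := by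
  rcases h.lt_or_eq with h | h
  · exact Or.inl h
  · exact Or.inr fun h' => exp_ne_zero z (Complex.ext h.symm h')

theorem exists_int_abs_im_sub_le {X : Type*} [TopologicalSpace X] {s : Set X}
    (hs : IsPreconnected s) {L : X → ℂ} (hL : ContinuousOn L s)
    (h : ∀ x ∈ s, 0 ≤ (exp (L x)).re) :
    ∃ n : ℤ, ∀ x ∈ s, |(L x).im - 2 * π * n| ≤ π / 2 := by
  obtain ⟨n, hn⟩ := exists_int_im_eq_arg_add hs hL fun x hx =>
    exp_mem_slitPlane_of_re_nonneg (h x hx)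
  refine ⟨n, fun x hx => ?_⟩
  rw [hn x hx, add_sub_cancel_right]
  exact abs_arg_le_pi_div_two_iff.2 (h x hx)

theorem exists_int_im_mem_Ioo {X : Type*} [TopologicalSpace X] {s : Set X}
    (hs : IsPreconnected s) {L : X → ℂ} (hL : ContinuousOn L s)
    (h : ∀ x ∈ s, (exp (L x)).im ≠ 0) :
    ∃ k : ℤ, ∀ x ∈ s, (L x).im ∈ Ioo (k * π) ((k + 1) * π) := by
  rcases s.eq_empty_or_nonempty with rfl | ⟨x₀, hx₀⟩
  · exact ⟨0, by simp⟩
  have hord : ((fun x => (L x).im) '' s).OrdConnected :=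
    (hs.image _ (continuous_im.comp_continuousOn hL)).ordConnected
  have hne (j : ℤ) : j * π ∉ (fun x => (L x).im) '' s := by
    rintro ⟨x, hx, hxj⟩
    exact h x hx (by rw [exp_im, show (L x).im = j * π from hxj, Real.sin_int_mul_pi, mul_zero])
  have hfloor := Int.floor_le ((L x₀).im / π)
  have hceil := Int.lt_floor_add_one ((L x₀).im / π)
  rw [le_div_iff₀ Real.pi_pos] at hfloor
  rw [div_lt_iff₀ Real.pi_pos] at hceil
  refine ⟨⌊(L x₀).im / π⌋, fun x hx => ⟨?_, ?_⟩⟩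
  · by_contra! hle
    exact hne _ (hord.out (mem_image_of_mem _ hx) (mem_image_of_mem _ hx₀) ⟨hle, hfloor⟩)
  · by_contra! hle
    refine hne (⌊(L x₀).im / π⌋ + 1)
      (hord.out (mem_image_of_mem _ hx₀) (mem_image_of_mem _ hx) ?_)
    push_cast
    exact ⟨hceil.le, hle⟩

theorem re_pos_of_norm_sub_one_lt {z : ℂ} (hz : ‖z - 1‖ < 1) : 0 < z.re := by
  have := (abs_lt.1 ((abs_re_le_norm (z - 1)).trans_lt hz)).1
  simp only [sub_re, one_re] at this
  linarith

/-! ### The winding argument in a strip -/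

theorem convex_unitSeparated (A S : ℝ) :
    Convex ℝ {p : ℝ × ℝ | A ≤ p.1 ∧ p.1 + 1 ≤ p.2 ∧ p.2 ≤ S} := by
  rintro ⟨a, b⟩ ⟨h1, h2, h3⟩ ⟨a', b'⟩ ⟨h1', h2', h3'⟩ s t hs ht hst
  simp only at h1 h2 h3 h1' h2' h3'
  obtain rfl : t = 1 - s := by linarith
  refine ⟨?_, ?_, ?_⟩ <;> simp only [Prod.smul_mk, Prod.mk_add_mk, smul_eq_mul] <;> nlinarith

-- Hopf's trick: the chord direction is deformed from the short chords `c t, c (t + 1)` to the two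
-- other sides of the triangle of unit-separated parameters, where its real part has a sign.
theorem exists_chord_log {c : ℝ → ℂ} {A S : ℝ} (hAS : A + 1 ≤ S) (hc : ContinuousOn c (Icc A S))
    (hne : ∀ a b, A ≤ a → a + 1 ≤ b → b ≤ S → c a ≠ c b)
    (hlo : ∀ t ∈ Icc A S, (c A).re ≤ (c t).re) (hhi : ∀ t ∈ Icc A S, (c t).re ≤ (c S).re) :
    ∃ L : ℝ → ℂ, ContinuousOn L (Icc A (S - 1)) ∧
      (∀ t ∈ Icc A (S - 1), exp (L t) = c (t + 1) - c t) ∧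
      |(L A).im| ≤ π / 2 ∧ |(L (S - 1)).im| ≤ π / 2 := by
  set K : Set (ℝ × ℝ) := {p | A ≤ p.1 ∧ p.1 + 1 ≤ p.2 ∧ p.2 ≤ S}
  have hchord : ContinuousOn (fun p : ℝ × ℝ => c p.2 - c p.1) K :=
    (hc.comp continuousOn_snd fun p hp => ⟨by linarith [hp.1, hp.2.1], hp.2.2⟩).sub
      (hc.comp continuousOn_fst fun p hp => ⟨hp.1, by linarith [hp.2.1, hp.2.2]⟩)
  obtain ⟨M, hMc, hM⟩ := exists_continuousOn_exp_eq (convex_unitSeparated A S) hchord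
    fun p hp => sub_ne_zero.2 (hne _ _ hp.1 hp.2.1 hp.2.2).symm
  set U : Set (ℝ × ℝ) := (fun b => (A, b)) '' Icc (A + 1) S ∪ (fun a => (a, S)) '' Icc A (S - 1)
  have hUK : U ⊆ K := by
    rintro _ (⟨b, ⟨h1, h2⟩, rfl⟩ | ⟨a, ⟨h1, h2⟩, rfl⟩)
    · exact ⟨le_rfl, h1, h2⟩
    · exact ⟨h1, by simp only; linarith, le_rfl⟩
  have hU : IsPreconnected U :=
    IsPreconnected.union (A, S) ⟨S, ⟨hAS, le_rfl⟩, rfl⟩ ⟨A, ⟨le_rfl, by linarith⟩, rfl⟩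
      (isPreconnected_Icc.image _ (by fun_prop)) (isPreconnected_Icc.image _ (by fun_prop))
  obtain ⟨n, hn⟩ := exists_int_abs_im_sub_le hU (hMc.mono hUK) fun p hp => by
    rw [hM p (hUK hp), sub_re, sub_nonneg]
    rcases hp with ⟨b, ⟨h1, h2⟩, rfl⟩ | ⟨a, ⟨h1, h2⟩, rfl⟩
    · exact hlo b ⟨by linarith, h2⟩
    · exact hhi a ⟨h1, by linarith⟩
  have hmem : ∀ t ∈ Icc A (S - 1), (t, t + 1) ∈ K := fun t ht =>
    ⟨ht.1, le_rfl, by simp only; linarith [ht.2]⟩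
  have him (z : ℂ) : (z - n * (2 * π * I)).im = z.im - 2 * π * n := by simp [mul_comm]
  refine ⟨fun t => M (t, t + 1) - n * (2 * π * I),
    (hMc.comp (by fun_prop) hmem).sub continuousOn_const, fun t ht => ?_, ?_, ?_⟩
  · rw [exp_sub, exp_int_mul_two_pi_mul_I, div_one, hM _ (hmem t ht)]
  · rw [him]
    exact hn _ (Or.inl ⟨A + 1, ⟨le_rfl, hAS⟩, rfl⟩)
  · simp only [sub_add_cancel, him]
    exact hn _ (Or.inr ⟨S - 1, ⟨by linarith, le_rfl⟩, rfl⟩)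

theorem exists_int_abs_im_sub_lt {c V : ℝ → ℂ} {A S : ℝ} (hAS : A + 1 ≤ S)
    (hc : ContinuousOn c (Icc A S)) (hne : ∀ a b, A ≤ a → a + 1 ≤ b → b ≤ S → c a ≠ c b)
    (hlo : ∀ t ∈ Icc A S, (c A).re ≤ (c t).re) (hhi : ∀ t ∈ Icc A S, (c t).re ≤ (c S).re)
    (hV : ContinuousOn V (Icc A (S - 1)))
    (hnear : ∀ t ∈ Icc A (S - 1), ‖c (t + 1) - c t - exp (V t)‖ < ‖exp (V t)‖) :
    ∃ n : ℤ, |(V A).im - 2 * π * n| < π ∧ |(V (S - 1)).im - 2 * π * n| < π := by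
  obtain ⟨L, hLc, hL, hLA, hLS⟩ := exists_chord_log hAS hc hne hlo hhi
  have hre : ∀ t ∈ Icc A (S - 1), 0 < (exp (L t - V t)).re := fun t ht => by
    apply re_pos_of_norm_sub_one_lt
    rw [exp_sub, div_sub_one (exp_ne_zero _), norm_div, div_lt_one (norm_pos_iff.2 (exp_ne_zero _)),
      hL t ht]
    exact hnear t ht
  obtain ⟨n, hn⟩ := exists_int_im_eq_arg_add isPreconnected_Icc (hLc.sub hV) fun t ht =>
    Or.inl (hre t ht)
  have harg : ∀ t ∈ Icc A (S - 1), |(L t).im - (V t).im - 2 * π * n| < π / 2 := fun t ht => by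
    rw [← sub_im, ← Pi.sub_apply, hn t ht, add_sub_cancel_right]
    exact abs_arg_lt_pi_div_two_iff.2 (Or.inl (hre t ht))
  have hA := harg A ⟨le_rfl, by linarith⟩
  have hS := harg (S - 1) ⟨by linarith, le_rfl⟩
  refine ⟨-n, ?_, ?_⟩ <;> push_cast <;> simp only [abs_lt, abs_le] at hA hS hLA hLS ⊢ <;>
    constructor <;> linarith

theorem int_mem_Icc_of_abs_sub_lt_pi {v : ℝ} {k n : ℤ} (hv : v ∈ Ioo (k * π) ((k + 1) * π))
    (h : |v - 2 * π * n| < π) : k ∈ Icc (2 * n - 1) (2 * n) := by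
  obtain ⟨h1, h2⟩ := abs_lt.1 h
  have hlo : (2 * n - 1 : ℝ) < k + 1 := lt_of_mul_lt_mul_right (by linarith [hv.2]) Real.pi_pos.le
  have hhi : (k : ℝ) < 2 * n + 1 := lt_of_mul_lt_mul_right (by linarith [hv.1]) Real.pi_pos.le
  norm_cast at hlo hhi
  exact ⟨by lia, by lia⟩

theorem exp_im_mul_exp_im_pos {z w : ℂ} {k : ℤ} (hz : z.im ∈ Ioo (k * π) ((k + 1) * π))
    (hw : w.im ∈ Ioo (k * π) ((k + 1) * π)) : 0 < (exp z).im * (exp w).im := by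
  have hsin {v : ℝ} (hv : v ∈ Ioo (k * π) ((k + 1) * π)) : 0 < Real.sin (v - k * π) :=
    Real.sin_pos_of_pos_of_lt_pi (by linarith [hv.1]) (by linarith [hv.2])
  have hprod := mul_pos (hsin hz) (hsin hw)
  rw [Real.sin_sub_int_mul_pi, Real.sin_sub_int_mul_pi, mul_mul_mul_comm, ← zpow_add₀ (by norm_num),
    Even.neg_one_zpow ⟨k, rfl⟩, one_mul] at hprod
  rw [exp_im, exp_im, mul_mul_mul_comm]
  exact mul_pos (mul_pos (Real.exp_pos _) (Real.exp_pos _)) hprod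

/-- A twist map of the vertical strip `l ≤ re ≤ 0`, as in the Poincaré–Birkhoff theorem: it moves
every point by at least `m`, and moves the left part `re ≤ l'` and the right edge `re = 0` in
opposite vertical directions. The sign `s` says which of the two goes up. -/
structure IsStripTwist (H : ℂ → ℂ) (l l' m s : ℝ) : Prop where
  left_lt : l < l'
  left_neg : l' < 0
  pos : 0 < m
  continuousOn : ContinuousOn H (re ⁻¹' Icc l 0)
  le_norm_sub : ∀ ζ : ℂ, ζ.re ∈ Icc l 0 → m ≤ ‖H ζ - ζ‖
  left : ∀ ζ : ℂ, ζ.re ∈ Icc l l' → s * (H ζ - ζ).im < 0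
  right : ∀ ζ : ℂ, ζ.re = 0 → 0 < s * (H ζ - ζ).im
  le_re : ∀ ζ : ℂ, ζ.re ∈ Icc l' 0 → l + m ≤ (H ζ).re

/-- A curve `c` in the strip `l ≤ re ≤ 0` whose time-one shift is the map `H` up to an error less
than `m`, and which does not return to a point after time one or more. -/
structure IsPseudoOrbit (H : ℂ → ℂ) (l m : ℝ) (c : ℝ → ℂ) (A S : ℝ) : Prop where
  add_one_le : A + 1 ≤ S
  continuousOn : ContinuousOn c (Icc A S)
  re_mem : ∀ t ∈ Icc A S, (c t).re ∈ Icc l 0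
  ne : ∀ a b, A ≤ a → a + 1 ≤ b → b ≤ S → c a ≠ c b
  near : ∀ t ∈ Icc A (S - 1), ‖c (t + 1) - H (c t)‖ < m

namespace IsPseudoOrbit

variable {H : ℂ → ℂ} {l l' m s : ℝ} {c : ℝ → ℂ} {A S : ℝ}

theorem mapsTo (hc : IsPseudoOrbit H l m c A S) : MapsTo c (Icc A (S - 1)) (re ⁻¹' Icc l 0) :=
  fun t ht => hc.re_mem t (Icc_subset_Icc_right (sub_le_self S zero_le_one) ht)

theorem continuousOn_sub_one (hc : IsPseudoOrbit H l m c A S) : ContinuousOn c (Icc A (S - 1)) :=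
  hc.continuousOn.mono (Icc_subset_Icc_right (sub_le_self S zero_le_one))

theorem right_mem (hc : IsPseudoOrbit H l m c A S) : S - 1 ∈ Icc A (S - 1) :=
  ⟨by linarith [hc.add_one_le], le_rfl⟩

theorem re_penultimate_le (hH : IsStripTwist H l l' m s) (hc : IsPseudoOrbit H l m c A S)
    (hcS : (c S).re = l) : (c (S - 1)).re ≤ l' := by
  by_contra! hlt
  have hnear := (abs_re_le_norm _).trans_lt (hc.near _ hc.right_mem)
  rw [sub_add_cancel, sub_re, hcS] at hnear
  linarith [(abs_lt.1 hnear).1,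
    hH.le_re _ ⟨hlt.le, (hc.mapsTo hc.right_mem).2⟩]

theorem exists_int_of_left_to_right (hH : IsStripTwist H l l' m s)
    (hc : IsPseudoOrbit H l m c A S) (hcA : (c A).re = l) (hcS : (c S).re = 0) {Λ : ℂ → ℂ}
    (hΛc : ContinuousOn Λ (re ⁻¹' Icc l 0)) (hΛ : ∀ ζ ∈ re ⁻¹' Icc l 0, exp (Λ ζ) = H ζ - ζ) :
    ∃ n : ℤ, |(Λ (c A)).im - 2 * π * n| < π ∧ |(Λ (c (S - 1))).im - 2 * π * n| < π := by
  refine exists_int_abs_im_sub_lt (V := fun t => Λ (c t)) hc.add_one_le hc.continuousOn hc.ne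
    (fun t ht => hcA.trans_le (hc.re_mem t ht).1) (fun t ht => (hc.re_mem t ht).2.trans_eq hcS.symm)
    (hΛc.comp hc.continuousOn_sub_one hc.mapsTo) fun t ht => ?_
  rw [hΛ _ (hc.mapsTo ht), sub_sub_sub_cancel_right]
  exact (hc.near t ht).trans_le (hH.le_norm_sub _ (hc.mapsTo ht))

theorem exists_int_of_right_to_left (hH : IsStripTwist H l l' m s)
    (hc : IsPseudoOrbit H l m c A S) (hcA : (c A).re = 0) (hcS : (c S).re = l) {Λ : ℂ → ℂ}
    (hΛc : ContinuousOn Λ (re ⁻¹' Icc l 0)) (hΛ : ∀ ζ ∈ re ⁻¹' Icc l 0, exp (Λ ζ) = H ζ - ζ) :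
    ∃ n : ℤ, |(Λ (c A)).im - π - 2 * π * n| < π ∧
      |(Λ (c (S - 1))).im - π - 2 * π * n| < π := by
  have hturn := exists_int_abs_im_sub_lt (c := -c) (V := fun t => Λ (c t) - π * I)
    hc.add_one_le hc.continuousOn.neg
    (fun a b ha hab hb h => hc.ne a b ha hab hb (neg_injective h))
    (fun t ht => by simpa [hcA] using (hc.re_mem t ht).2)
    (fun t ht => by simpa [hcS] using (hc.re_mem t ht).1)
    ((hΛc.comp hc.continuousOn_sub_one hc.mapsTo).sub continuousOn_const) fun t ht => by
      rw [exp_sub, exp_pi_mul_I, hΛ _ (hc.mapsTo ht), div_neg, div_one, norm_neg, Pi.neg_apply,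
        Pi.neg_apply, show -c (t + 1) - -c t - -(H (c t) - c t) = -(c (t + 1) - H (c t)) by ring,
        norm_neg]
      exact (hc.near t ht).trans_le (hH.le_norm_sub _ (hc.mapsTo ht))
  simpa using hturn

end IsPseudoOrbit

theorem IsStripTwist.exists_angle {H : ℂ → ℂ} {l l' m s : ℝ} (hH : IsStripTwist H l l' m s) :
    ∃ (Λ : ℂ → ℂ) (k k' : ℤ), ContinuousOn Λ (re ⁻¹' Icc l 0) ∧
      (∀ ζ ∈ re ⁻¹' Icc l 0, exp (Λ ζ) = H ζ - ζ) ∧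
      (∀ ζ ∈ re ⁻¹' Icc l l', (Λ ζ).im ∈ Ioo (k * π) ((k + 1) * π)) ∧
      (∀ ζ ∈ re ⁻¹' {0}, (Λ ζ).im ∈ Ioo (k' * π) ((k' + 1) * π)) ∧ k ≠ k' := by
  have hconv : Convex ℝ (re ⁻¹' Icc l 0) :=
    (convex_halfSpace_re_ge l).inter (convex_halfSpace_re_le 0)
  obtain ⟨Λ, hΛc, hΛ⟩ := exists_continuousOn_exp_eq (f := fun ζ => H ζ - ζ) hconv
    (hH.continuousOn.sub continuousOn_id)
    fun ζ hζ => norm_pos_iff.1 (hH.pos.trans_le (hH.le_norm_sub ζ hζ))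
  have hll := hH.left_lt
  have hl := hH.left_neg
  have hleft : re ⁻¹' Icc l l' ⊆ re ⁻¹' Icc l 0 := preimage_mono (Icc_subset_Icc_right hl.le)
  have hright : re ⁻¹' {0} ⊆ re ⁻¹' Icc l 0 := preimage_mono (by simpa using (hll.trans hl).le)
  obtain ⟨k, hk⟩ := exists_int_im_mem_Ioo (s := re ⁻¹' Icc l l')
    ((convex_halfSpace_re_ge l).inter (convex_halfSpace_re_le l')).isPreconnected
    (hΛc.mono hleft) fun ζ hζ h0 => by
      have := hH.left ζ hζ
      rw [← hΛ ζ (hleft hζ), h0, mul_zero] at this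
      exact this.false
  obtain ⟨k', hk'⟩ := exists_int_im_mem_Ioo (s := re ⁻¹' {0})
    (convex_hyperplane reLm.isLinear 0).isPreconnected
    (hΛc.mono hright) fun ζ hζ h0 => by
      have := hH.right ζ hζ
      rw [← hΛ ζ (hright hζ), h0, mul_zero] at this
      exact this.false
  refine ⟨Λ, k, k', hΛc, hΛ, hk, hk', ?_⟩
  rintro rfl
  have hl_mem : (l : ℂ) ∈ re ⁻¹' Icc l l' := by simp [hll.le]
  have h0_mem : (0 : ℂ) ∈ re ⁻¹' {0} := by simp
  have hpos := exp_im_mul_exp_im_pos (hk _ hl_mem) (hk' _ h0_mem)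
  have hneg := mul_neg_of_neg_of_pos (hH.left _ hl_mem) (hH.right _ h0_mem)
  rw [← hΛ _ (hleft hl_mem), ← hΛ _ (hright h0_mem), mul_mul_mul_comm] at hneg
  exact absurd (mul_nonneg (mul_self_nonneg s) hpos.le) hneg.not_ge

-- The angle of the displacement lies in one interval `(k π, (k + 1) π)` on the left part and in
-- another one on the right edge. The curve `c` forces these two values of `k` to be
-- `{2n - 1, 2n}`, while `d`, which crosses the strip the other way, forces `{2n, 2n + 1}`.
theorem IsStripTwist.false_of_isPseudoOrbit {H : ℂ → ℂ} {l l' m s A S B T : ℝ} {c d : ℝ → ℂ}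
    (hH : IsStripTwist H l l' m s)
    (hc : IsPseudoOrbit H l m c A S) (hcA : (c A).re = l) (hcS' : (c (S - 1)).re = 0)
    (hcS : (c S).re = 0)
    (hd : IsPseudoOrbit H l m d B T) (hdB : (d B).re = 0) (hdT : (d T).re = l) : False := by
  obtain ⟨Λ, k, k', hΛc, hΛ, hk, hk', hne⟩ := hH.exists_angle
  obtain ⟨n, hnA, hnS⟩ := hc.exists_int_of_left_to_right hH hcA hcS hΛc hΛ
  obtain ⟨n', hnB, hnT⟩ := hd.exists_int_of_right_to_left hH hdB hdT hΛc hΛ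
  have hshift {v : ℝ} {j : ℤ} (hv : v ∈ Ioo (j * π) ((j + 1) * π)) :
      v - π ∈ Ioo ((j - 1 : ℤ) * π) (((j - 1 : ℤ) + 1) * π) := by
    push_cast
    exact ⟨by linarith [hv.1], by linarith [hv.2]⟩
  have hkA := hk (c A) (by simp [hcA, hH.left_lt.le])
  have hkT := hk (d (T - 1)) ⟨(hd.mapsTo hd.right_mem).1, hd.re_penultimate_le hH hdT⟩
  have h1 := int_mem_Icc_of_abs_sub_lt_pi hkA hnA
  have h2 := int_mem_Icc_of_abs_sub_lt_pi (hk' _ hcS') hnS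
  have h3 := int_mem_Icc_of_abs_sub_lt_pi (hshift (hk' _ hdB)) hnB
  have h4 := int_mem_Icc_of_abs_sub_lt_pi (hshift hkT) hnT
  simp only [mem_Icc] at h1 h2 h3 h4
  lia

/-! ### The disk and its half-plane covering -/

instance : CompactSpace Disk := isCompact_iff_compactSpace.1 (isCompact_closedBall 0 1)

theorem norm_coe_le_one (x : Disk) : ‖(x : ℂ)‖ ≤ 1 := mem_closedBall_zero_iff.1 x.2

/-- The universal covering `exp` of the punctured disk by the half-plane `re ≤ 0`. It is extended
to all of `ℂ` through the retraction of `ℂ` onto this half-plane. -/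
noncomputable def diskCover (ζ : ℂ) : Disk :=
  ⟨exp ((min ζ.re 0 : ℝ) + ζ.im * I), by simp [Disk, norm_exp]⟩

theorem continuous_diskCover : Continuous diskCover :=
  Continuous.subtype_mk (by fun_prop) _

theorem coe_diskCover {ζ : ℂ} (h : ζ.re ≤ 0) : (diskCover ζ : ℂ) = exp ζ := by
  simp only [diskCover, min_eq_left h, re_add_im]

theorem coe_diskCover_mul_I (t : ℝ) : (diskCover (t * I) : ℂ) = exp (t * I) :=
  coe_diskCover (by simp)

theorem norm_diskCover (ζ : ℂ) : ‖(diskCover ζ : ℂ)‖ = Real.exp (min ζ.re 0) := by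
  simp [diskCover, norm_exp]

theorem norm_diskCover_mul_I (t : ℝ) : ‖(diskCover (t * I) : ℂ)‖ = 1 := by
  simp [norm_diskCover]

theorem diskCover_ne_zero (ζ : ℂ) : (diskCover ζ : ℂ) ≠ 0 := exp_ne_zero _

theorem diskCover_add_int_mul (ζ : ℂ) (n : ℤ) : diskCover (ζ + n * (2 * π * I)) = diskCover ζ := by
  refine Subtype.ext (exp_eq_exp_iff_exists_int.2 ⟨n, ?_⟩)
  simp
  ring

theorem diskCover_mul_I_eq_iff {s t : ℝ} :
    diskCover (s * I) = diskCover (t * I) ↔ ∃ n : ℤ, s = t + n * (2 * π) := by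
  rw [Subtype.ext_iff, coe_diskCover_mul_I, coe_diskCover_mul_I, exp_eq_exp_iff_exists_int]
  refine exists_congr fun n => ?_
  rw [← mul_assoc, ← add_mul, mul_left_inj' I_ne_zero]
  norm_cast

theorem exists_diskCover_eq {x : Disk} (hx : (x : ℂ) ≠ 0) :
    ∃ ζ : ℂ, ζ.re ≤ 0 ∧ diskCover ζ = x := by
  have hre : (log (x : ℂ)).re ≤ 0 := by
    rw [log_re]
    exact Real.log_nonpos (norm_nonneg _) (norm_coe_le_one x)
  exact ⟨log x, hre, Subtype.ext (by rw [coe_diskCover hre, exp_log hx])⟩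

theorem exists_diskCover_mul_I_eq {x : Disk} (hx : ‖(x : ℂ)‖ = 1) :
    ∃ t : ℝ, diskCover (t * I) = x := by
  have hpolar := norm_mul_exp_arg_mul_I (x : ℂ)
  rw [hx, ofReal_one, one_mul] at hpolar
  exact ⟨arg x, Subtype.ext (by rw [coe_diskCover_mul_I, hpolar])⟩

/-! ### Conjugates of rotations -/

/-- The rotation of the disk by the angle `θ`. -/
noncomputable def diskRotation (θ : ℝ) : Disk ≃ₜ Disk where
  toFun x := ⟨exp (θ * I) * x, by
    simpa [Disk, norm_exp_ofReal_mul_I] using norm_coe_le_one x⟩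
  invFun x := ⟨exp ((-θ : ℝ) * I) * x, by
    simpa [Disk, norm_exp_ofReal_mul_I, -ofReal_neg] using norm_coe_le_one x⟩
  left_inv x := by simp [← mul_assoc, ← exp_add]
  right_inv x := by simp [← mul_assoc, ← exp_add]
  continuous_toFun := Continuous.subtype_mk (by fun_prop) _
  continuous_invFun := Continuous.subtype_mk (by fun_prop) _

theorem coe_diskRotation (θ : ℝ) (x : Disk) : (diskRotation θ x : ℂ) = exp (θ * I) * x := rfl

theorem diskRotation_zero (x : Disk) : diskRotation 0 x = x :=
  Subtype.ext (by simp [coe_diskRotation])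

theorem diskRotation_add (θ η : ℝ) (x : Disk) :
    diskRotation (θ + η) x = diskRotation θ (diskRotation η x) :=
  Subtype.ext (by simp [coe_diskRotation, add_mul, exp_add, mul_assoc])

theorem diskRotation_diskCover (θ : ℝ) (ζ : ℂ) :
    diskRotation θ (diskCover ζ) = diskCover (ζ + θ * I) :=
  Subtype.ext (by
    rw [coe_diskRotation]
    simp only [diskCover, add_re, add_im, re_ofReal_mul, im_ofReal_mul, I_re, I_im, mul_zero,
      add_zero, mul_one, ← exp_add]
    push_cast
    ring_nf)

theorem diskRotation_diskCover_mul_I (θ t : ℝ) :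
    diskRotation θ (diskCover (t * I)) = diskCover ((t + θ : ℝ) * I) := by
  rw [diskRotation_diskCover, ofReal_add, add_mul]

/-- The conjugate `g⁻¹ ∘ R_θ ∘ g` of a rotation of the disk. -/
noncomputable def conjRotation (g : Disk ≃ₜ Disk) (θ : ℝ) : C(Disk, Disk) :=
  ⟨fun x => g.symm (diskRotation θ (g x)), by fun_prop⟩

theorem conjRotation_apply (g : Disk ≃ₜ Disk) (θ : ℝ) (x : Disk) :
    conjRotation g θ x = g.symm (diskRotation θ (g x)) := rfl

/-- A homeomorphism of the disk that maps the unit circle onto itself. By invariance of domain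
every homeomorphism does, but the diffeomorphisms and Möbius maps considered here do so for
elementary reasons. -/
def PreservesCircle (g : Disk ≃ₜ Disk) : Prop := ∀ x : Disk, ‖(g x : ℂ)‖ = 1 ↔ ‖(x : ℂ)‖ = 1

theorem PreservesCircle.symm {g : Disk ≃ₜ Disk} (hg : PreservesCircle g) :
    PreservesCircle g.symm := fun x => by
  rw [← hg (g.symm x), g.apply_symm_apply]

theorem PreservesCircle.norm_conjRotation_eq_one_iff {g : Disk ≃ₜ Disk} (hg : PreservesCircle g)
    (θ : ℝ) (x : Disk) : ‖(conjRotation g θ x : ℂ)‖ = 1 ↔ ‖(x : ℂ)‖ = 1 := by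
  rw [conjRotation_apply, hg.symm, coe_diskRotation, norm_mul, norm_exp_ofReal_mul_I, one_mul, hg]

/-! ### Lifts of circle maps -/

/-- `b` is a lift to `ℝ` of the restriction of `f` to the unit circle. -/
structure IsCircleLift (f : Disk → Disk) (b : ℝ → ℝ) : Prop where
  continuous : Continuous b
  diskCover_eq : ∀ t : ℝ, diskCover (b t * I) = f (diskCover (t * I))

theorem exists_isCircleLift {f : Disk → Disk} (hf : Continuous f)
    (hf1 : ∀ x : Disk, ‖(x : ℂ)‖ = 1 → ‖(f x : ℂ)‖ = 1) : ∃ b, IsCircleLift f b := by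
  have hcont : Continuous fun t : ℝ => (f (diskCover (t * I)) : ℂ) :=
    continuous_subtype_val.comp (hf.comp (continuous_diskCover.comp (by fun_prop)))
  have hnorm (t : ℝ) : ‖(f (diskCover (t * I)) : ℂ)‖ = 1 := hf1 _ (norm_diskCover_mul_I t)
  obtain ⟨L, hLc, hL⟩ := exists_continuousOn_exp_eq convex_univ hcont.continuousOn
    fun t _ => norm_ne_zero_iff.1 (by simp [hnorm])
  refine ⟨fun t => (L t).im, continuous_im.comp (continuousOn_univ.1 hLc),
    fun t => Subtype.ext ?_⟩
  have hre := hnorm t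
  rw [← hL t (mem_univ t), norm_exp, Real.exp_eq_one_iff] at hre
  rw [coe_diskCover_mul_I, ← hL t (mem_univ t)]
  congr 1
  apply Complex.ext <;> simp [hre]

namespace IsCircleLift

variable {f f' : Disk → Disk} {b b' : ℝ → ℝ}

theorem exists_eq_add (hb : IsCircleLift f b) (hb' : IsCircleLift f b') :
    ∃ n : ℤ, ∀ t, b t = b' t + n * (2 * π) := by
  obtain ⟨n, hn⟩ := exists_int_eqOn_of_exp_eqOn (L := fun t => (b t : ℂ) * I)
    (V := fun t => (b' t : ℂ) * I) isPreconnected_univ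
    (by have := hb.continuous; fun_prop) (by have := hb'.continuous; fun_prop)
    fun t _ => by rw [← coe_diskCover_mul_I, ← coe_diskCover_mul_I, hb.diskCover_eq,
      hb'.diskCover_eq]
  exact ⟨n, fun t => by simpa using congrArg im (hn t (mem_univ t))⟩

theorem comp (hb : IsCircleLift f b) (hb' : IsCircleLift f' b') :
    IsCircleLift (f ∘ f') (b ∘ b') :=
  ⟨hb.continuous.comp hb'.continuous, fun t => by
    rw [Function.comp_apply, hb.diskCover_eq, hb'.diskCover_eq, Function.comp_apply]⟩

theorem comp_add (hb : IsCircleLift f b) (τ : ℝ) :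
    IsCircleLift (f ∘ diskRotation τ) (fun t => b (t + τ)) :=
  ⟨hb.continuous.comp (by fun_prop), fun t => by
    rw [hb.diskCover_eq, Function.comp_apply, diskRotation_diskCover_mul_I]⟩

theorem exists_add_two_pi (hb : IsCircleLift f b) :
    ∃ n : ℤ, ∀ t, b (t + 2 * π) = b t + n * (2 * π) := by
  have hrot (x : Disk) : diskRotation (2 * π) x = x :=
    Subtype.ext (by simp [coe_diskRotation])
  refine exists_eq_add (f := f) ?_ hb
  simpa only [Function.comp_def, hrot] using hb.comp_add (2 * π)

theorem two_pi_le_abs_sub (hb : IsCircleLift f b) (hinj : b.Injective) {s t : ℝ}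
    (h : s + 2 * π ≤ t) : 2 * π ≤ |b t - b s| := by
  obtain ⟨n, hn⟩ := hb.exists_add_two_pi
  have hperiod : 2 * π ≤ |b (s + 2 * π) - b s| := by
    have hn0 : n ≠ 0 := by
      rintro rfl
      have := hinj (by simpa using hn s)
      linarith [Real.pi_pos]
    rw [hn, add_sub_cancel_left, abs_mul, abs_of_pos Real.two_pi_pos]
    exact le_mul_of_one_le_left Real.two_pi_pos.le (mod_cast Int.one_le_abs hn0)
  refine hperiod.trans ?_
  have hs : s ≤ s + 2 * π := by linarith [Real.pi_pos]
  rcases hb.continuous.strictMono_of_inj hinj with hmono | hanti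
  · rw [abs_of_nonneg (sub_nonneg.2 (hmono.monotone hs)),
      abs_of_nonneg (sub_nonneg.2 (hmono.monotone (hs.trans h)))]
    linarith [hmono.monotone h]
  · rw [abs_of_nonpos (sub_nonpos.2 (hanti.antitone hs)),
      abs_of_nonpos (sub_nonpos.2 (hanti.antitone (hs.trans h)))]
    linarith [hanti.antitone h]

theorem exists_apply_eq_self (hb : IsCircleLift f b) {t : ℝ}
    (ht : f (diskCover (t * I)) = diskCover (t * I)) :
    ∃ b', IsCircleLift f b' ∧ b' t = t := by
  obtain ⟨n, hn⟩ := diskCover_mul_I_eq_iff.1 ((hb.diskCover_eq t).trans ht)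
  refine ⟨fun u => b u - n * (2 * π), ⟨hb.continuous.sub continuous_const, fun u => ?_⟩, ?_⟩
  · rw [← hb.diskCover_eq, eq_comm, diskCover_mul_I_eq_iff]
    exact ⟨n, (sub_add_cancel _ _).symm⟩
  · simp only [hn, add_sub_cancel_right]

theorem exists_translation {g : Disk ≃ₜ Disk} {θ : ℝ} (hb : IsCircleLift g.symm b)
    (hsurj : b.Surjective) {F : ℝ → ℝ} (hF : IsCircleLift (conjRotation g θ) F) :
    ∃ τ : ℝ, exp (τ * I) = exp (θ * I) ∧ ∀ t, F (b t) = b (t + τ) := by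
  obtain ⟨τ, hτ⟩ := hsurj (F (b 0))
  have hcomp (x : Disk) : conjRotation g θ (g.symm x) = g.symm (diskRotation θ x) := by
    rw [conjRotation_apply, g.apply_symm_apply]
  have hexp : exp (τ * I) = exp (θ * I) := by
    have h : diskCover (τ * I) = diskRotation θ (diskCover ((0 : ℝ) * I)) := by
      apply g.symm.injective
      rw [← hb.diskCover_eq, hτ, hF.diskCover_eq, hb.diskCover_eq, hcomp]
    rw [← coe_diskCover_mul_I, h, diskRotation_diskCover_mul_I, zero_add, coe_diskCover_mul_I]
  have hrot : diskRotation τ = diskRotation θ :=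
    Homeomorph.ext fun x => Subtype.ext (by rw [coe_diskRotation, coe_diskRotation, hexp])
  have hFb : IsCircleLift (g.symm ∘ diskRotation τ) (F ∘ b) := by
    simpa only [Function.comp_def, hrot, hcomp] using hF.comp hb
  obtain ⟨n, hn⟩ := hFb.exists_eq_add (hb.comp_add τ)
  have hn0 : (n : ℝ) * (2 * π) = 0 := by simpa [hτ] using hn 0
  exact ⟨τ, hexp, fun t => by simpa [hn0] using hn t⟩

end IsCircleLift

theorem PreservesCircle.exists_bijective_isCircleLift {g : Disk ≃ₜ Disk} (hg : PreservesCircle g) :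
    ∃ b, IsCircleLift g b ∧ b.Bijective := by
  obtain ⟨b, hb⟩ := exists_isCircleLift g.continuous fun x hx => (hg x).2 hx
  obtain ⟨a, ha⟩ := exists_isCircleLift g.symm.continuous fun x hx => (hg.symm x).2 hx
  have hid : IsCircleLift (fun x => x) fun t => t := ⟨continuous_id, fun t => rfl⟩
  obtain ⟨n, hn⟩ : ∃ n : ℤ, ∀ t, a (b t) = t + n * (2 * π) :=
    IsCircleLift.exists_eq_add (by simpa [Function.comp_def] using ha.comp hb) hid
  obtain ⟨k, hk⟩ : ∃ k : ℤ, ∀ t, b (a t) = t + k * (2 * π) :=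
    IsCircleLift.exists_eq_add (by simpa [Function.comp_def] using hb.comp ha) hid
  refine ⟨b, hb, fun s t hst => ?_, fun t => ⟨a (t - k * (2 * π)), by rw [hk, sub_add_cancel]⟩⟩
  simpa [hn] using congrArg a hst

/-! ### Lifts to the half-plane -/

/-- `H` is a lift of `f` along `diskCover` over the part `re ζ ∈ K` of the half-plane. -/
structure IsCoverLift (f : Disk → Disk) (H : ℂ → ℂ) (K : Set ℝ) : Prop where
  continuousOn : ContinuousOn H (re ⁻¹' K)
  exp_eq : ∀ ζ : ℂ, ζ.re ∈ K → exp (H ζ) = f (diskCover ζ)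
  add_int_mul : ∀ (ζ : ℂ) (n : ℤ), ζ.re ∈ K → H (ζ + n * (2 * π * I)) = H ζ + n * (2 * π * I)

namespace IsCoverLift

variable {f : Disk → Disk} {H : ℂ → ℂ} {K : Set ℝ}

theorem re_nonpos (hH : IsCoverLift f H K) {ζ : ℂ} (hζ : ζ.re ∈ K) : (H ζ).re ≤ 0 := by
  have h := norm_coe_le_one (f (diskCover ζ))
  rwa [← hH.exp_eq ζ hζ, norm_exp, Real.exp_le_one_iff] at h

theorem diskCover_eq (hH : IsCoverLift f H K) {ζ : ℂ} (hζ : ζ.re ∈ K) :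
    diskCover (H ζ) = f (diskCover ζ) :=
  Subtype.ext (by rw [coe_diskCover (hH.re_nonpos hζ), hH.exp_eq ζ hζ])

theorem re_eq_zero (hH : IsCoverLift f H K) (hK : 0 ∈ K)
    (hf : ∀ x : Disk, ‖(x : ℂ)‖ = 1 → ‖(f x : ℂ)‖ = 1) {ζ : ℂ} (hζ : ζ.re = 0) :
    (H ζ).re = 0 := by
  have h := hf (diskCover ζ) (by simp [norm_diskCover, hζ])
  rwa [← hH.exp_eq ζ (hζ ▸ hK), norm_exp, Real.exp_eq_one_iff] at h

theorem apply_mul_I (hH : IsCoverLift f H K) (hK : 0 ∈ K)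
    (hf : ∀ x : Disk, ‖(x : ℂ)‖ = 1 → ‖(f x : ℂ)‖ = 1) (y : ℝ) :
    H (y * I) = ((H (y * I)).im : ℝ) * I := by
  apply Complex.ext <;> simp [hH.re_eq_zero hK hf (ζ := y * I)]

theorem isCircleLift (hH : IsCoverLift f H K) (hK : 0 ∈ K)
    (hf : ∀ x : Disk, ‖(x : ℂ)‖ = 1 → ‖(f x : ℂ)‖ = 1) :
    IsCircleLift f fun y => (H (y * I)).im where
  continuous := continuous_im.comp
    (hH.continuousOn.comp_continuous (by fun_prop) fun y => by simpa using hK)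
  diskCover_eq y := by rw [← hH.apply_mul_I hK hf, hH.diskCover_eq (by simpa using hK)]

end IsCoverLift

/-! ### Spirals -/

theorem norm_log_lt_of_norm_sub_one_lt {q : ℂ} {ε : ℝ} (h : ‖q - 1‖ < min (1 / 2) (ε / 2)) :
    ‖log q‖ < ε := by
  have hlog := norm_log_one_add_half_le_self (h.le.trans (min_le_left _ _))
  rw [add_sub_cancel] at hlog
  linarith [h.trans_le (min_le_right _ _), norm_nonneg (q - 1)]

theorem mem_slitPlane_of_norm_sub_one_lt {q : ℂ} (h : ‖q - 1‖ < 1 / 2) : q ∈ slitPlane :=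
  Or.inl (re_pos_of_norm_sub_one_lt (h.trans (by norm_num)))

theorem norm_sub_lt_of_norm_exp_sub_lt {X : Type*} [TopologicalSpace X] {s : Set X}
    (hs : IsPreconnected s) {P Q : X → ℂ} (hP : ContinuousOn P s) (hQ : ContinuousOn Q s) {ε : ℝ}
    (h : ∀ x ∈ s, ‖exp (P x) - exp (Q x)‖ < ‖exp (Q x)‖ * min (1 / 2) (ε / 2)) {x₀ : X}
    (hx₀ : x₀ ∈ s) (h₀ : P x₀ = Q x₀) : ∀ x ∈ s, ‖P x - Q x‖ < ε := by
  have hq : ∀ x ∈ s, ‖exp (P x - Q x) - 1‖ < min (1 / 2) (ε / 2) := by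
    intro x hx
    rw [exp_sub, div_sub_one (exp_ne_zero _), norm_div,
      div_lt_iff₀' (norm_pos_iff.2 (exp_ne_zero _))]
    exact h x hx
  have hslit : ∀ x ∈ s, exp (P x - Q x) ∈ slitPlane := fun x hx =>
    mem_slitPlane_of_norm_sub_one_lt ((hq x hx).trans_le (min_le_left _ _))
  obtain ⟨n, hn⟩ := exists_int_eqOn_of_exp_eqOn hs (L := fun x => P x - Q x)
    (V := fun x => log (exp (P x - Q x))) (hP.sub hQ)
    ((hP.sub hQ).cexp.clog hslit) fun _ _ => (exp_log (exp_ne_zero _)).symm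
  have hn₀ : (n : ℂ) * (2 * π * I) = 0 := by simpa [h₀] using hn x₀ hx₀
  intro x hx
  rw [hn x hx, hn₀, add_zero]
  exact norm_log_lt_of_norm_sub_one_lt (hq x hx)

theorem norm_exp_sub_exp_le_of_re_nonpos {z w : ℂ} (hz : z.re ≤ 0) (hw : w.re ≤ 0) :
    ‖exp z - exp w‖ ≤ ‖z - w‖ := by
  simpa using (convex_halfSpace_re_le 0).norm_image_sub_le_of_norm_deriv_le
    (f := exp) (C := 1) (fun _ _ => differentiableAt_exp)
    (fun x hx => by rw [Complex.deriv_exp, norm_exp]; exact Real.exp_le_one_iff.2 hx) hw hz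

theorem dist_diskCover_add_ofReal_le (ζ : ℂ) (x : ℝ) :
    dist (diskCover (ζ + x)) (diskCover ζ) ≤ |x| := by
  rw [Subtype.dist_eq, dist_eq_norm]
  calc ‖(diskCover (ζ + x) : ℂ) - diskCover ζ‖
    _ ≤ |min (ζ.re + x) 0 - min ζ.re 0| := by
      refine (norm_exp_sub_exp_le_of_re_nonpos (by simp) (by simp)).trans_eq ?_
      rw [← Real.norm_eq_abs, ← norm_real]
      simp
    _ ≤ |x| := by simpa using abs_min_sub_min_le_max (ζ.re + x) 0 ζ.re 0

theorem min_zero_eq_min_zero_iff {u v : ℝ} :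
    min u 0 = min v 0 ↔ u = v ∨ 0 ≤ u ∧ 0 ≤ v := by
  grind

theorem exists_log_mem_strip {V : ℝ → Disk} (hV : Continuous V) {l A S : ℝ}
    (h : ∀ t ∈ Icc A S, Real.exp l ≤ ‖(V t : ℂ)‖) :
    ∃ c : ℝ → ℂ, ContinuousOn c (Icc A S) ∧
      ∀ t ∈ Icc A S, (c t).re ∈ Icc l 0 ∧ diskCover (c t) = V t := by
  obtain ⟨c, hcc, hc⟩ := exists_continuousOn_exp_eq (convex_Icc A S)
    (continuous_subtype_val.comp hV).continuousOn
    fun t ht => norm_pos_iff.1 ((Real.exp_pos l).trans_le (h t ht))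
  refine ⟨c, hcc, fun t ht => ?_⟩
  have hnorm : Real.exp (c t).re = ‖(V t : ℂ)‖ := by rw [← norm_exp, hc t ht, Function.comp_apply]
  have hre : (c t).re ≤ 0 := Real.exp_le_one_iff.1 (hnorm.trans_le (norm_coe_le_one _))
  exact ⟨⟨Real.exp_le_exp.1 ((h t ht).trans_eq hnorm.symm), hre⟩,
    Subtype.ext (by rw [coe_diskCover hre, hc t ht, Function.comp_apply])⟩

theorem diskCover_of_re_nonneg {ζ : ℂ} (h : 0 ≤ ζ.re) : diskCover ζ = diskCover (ζ.im * I) :=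
  Subtype.ext (by simp [diskCover, h])

section Spiral

/-- `w` is the velocity of spirals `t ↦ diskCover (a + t * w)` whose images under `g⁻¹` are nearly
orbits of `conjRotation g θ`: it rotates by `θ` per unit of time, and its radial part is so small
that `g⁻¹` turns it into an error below `m` in the half-plane `l ≤ re`. The lift `b` of `g⁻¹` to the
boundary conjugates the lift `H` of `conjRotation g θ` to the translation by `w.im`. -/
structure IsSpiralVelocity (g : Disk ≃ₜ Disk) (θ : ℝ) (H : ℂ → ℂ) (l m : ℝ) (b : ℝ → ℝ) (w : ℂ) :
    Prop where
  isCircleLift : IsCircleLift g.symm b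
  apply_lift : ∀ t, H (b t * I) = b (t + w.im) * I
  exp_eq : exp (w.im * I) = exp (θ * I)
  re_ne_zero : w.re ≠ 0
  dist_lt : ∀ x y : Disk, dist x y ≤ |w.re| →
    dist (g.symm x) (g.symm y) < Real.exp l * min (1 / 2) (m / 2)

variable {g : Disk ≃ₜ Disk} {b : ℝ → ℝ} {θ l m : ℝ} {H : ℂ → ℂ} {a w : ℂ} {c : ℝ → ℂ}

theorem IsSpiralVelocity.lift_apply_eq (hw : IsSpiralVelocity g θ H l m b w)
    (hH : IsCoverLift (conjRotation g θ) H (Icc l 0)) (hl : l ≤ 0) {t₀ : ℝ}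
    (hcc : ContinuousOn c (Icc t₀ (t₀ + 1)))
    (hc : ∀ t ∈ Icc t₀ (t₀ + 1),
      (c t).re ∈ Icc l 0 ∧ diskCover (c t) = g.symm (diskCover (a + t * w)))
    (ht₀ : ∀ t ∈ Icc t₀ (t₀ + 1), 0 ≤ (a + t * w).re) : H (c t₀) = c (t₀ + 1) := by
  obtain ⟨n, hn⟩ := exists_int_eqOn_of_exp_eqOn (isPreconnected_Icc (a := t₀) (b := t₀ + 1)) hcc
    (V := fun t : ℝ => (b (a + t * w).im : ℂ) * I)
    (by have := hw.isCircleLift.continuous; fun_prop) fun t ht => by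
      rw [← coe_diskCover (hc t ht).1.2, (hc t ht).2, diskCover_of_re_nonneg (ht₀ t ht),
        ← hw.isCircleLift.diskCover_eq, coe_diskCover_mul_I]
  rw [hn t₀ (left_mem_Icc.2 (by linarith)), hn (t₀ + 1) (right_mem_Icc.2 (by linarith)),
    hH.add_int_mul _ _ (by simpa using hl), hw.apply_lift]
  simp [add_mul, add_assoc]

theorem IsSpiralVelocity.norm_exp_lift_sub_exp_lt (hw : IsSpiralVelocity g θ H l m b w)
    (hH : IsCoverLift (conjRotation g θ) H (Icc l 0)) {t : ℝ}
    (ht : (c t).re ∈ Icc l 0 ∧ diskCover (c t) = g.symm (diskCover (a + t * w)))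
    (ht' : (c (t + 1)).re ∈ Icc l 0 ∧
      diskCover (c (t + 1)) = g.symm (diskCover (a + (t + 1 : ℝ) * w))) :
    ‖exp (H (c t)) - exp (c (t + 1))‖ < Real.exp l * min (1 / 2) (m / 2) := by
  have hrot : diskRotation θ = diskRotation w.im :=
    Homeomorph.ext fun x => Subtype.ext (by rw [coe_diskRotation, coe_diskRotation, hw.exp_eq])
  have hstep : a + (t + 1 : ℝ) * w = a + t * w + w.im * I + w.re := by
    push_cast
    linear_combination -(re_add_im w)
  rw [hH.exp_eq _ ht.1, ← coe_diskCover ht'.1.2, ht.2, ht'.2, conjRotation_apply,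
    g.apply_symm_apply, hrot, diskRotation_diskCover, ← dist_eq_norm, ← Subtype.dist_eq, hstep]
  refine hw.dist_lt _ _ ?_
  rw [dist_comm]
  exact dist_diskCover_add_ofReal_le _ _

theorem re_spiral_nonneg_of_apply_eq {s t : ℝ} (hw₀ : w.re ≠ 0) (hst : s ≠ t)
    (hs : diskCover (c s) = g.symm (diskCover (a + s * w)))
    (ht : diskCover (c t) = g.symm (diskCover (a + t * w))) (h : c s = c t) :
    0 ≤ (a + s * w).re ∧ 0 ≤ (a + t * w).re := by
  have hW : diskCover (a + s * w) = diskCover (a + t * w) :=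
    g.symm.injective (by rw [← hs, ← ht, h])
  have hnorm := congrArg (fun x : Disk => ‖(x : ℂ)‖) hW
  simp only [norm_diskCover, Real.exp_eq_exp] at hnorm
  refine (min_zero_eq_min_zero_iff.1 hnorm).resolve_left fun heq => hst ?_
  simpa [hw₀] using heq

-- The lift `c` of a spiral is a pseudo-orbit: the rotation carries the spiral to itself shifted by
-- time one, up to the small radial displacement `w.re`. The circle piece of the spiral, where `b`
-- is available, shows that the lifts `H (c t)` and `c (t + 1)` lie on the same sheet.
theorem IsSpiralVelocity.exists_isPseudoOrbit (hw : IsSpiralVelocity g θ H l m b w)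
    (hH : IsCoverLift (conjRotation g θ) H (Icc l 0)) (hl : l ≤ 0)
    (hm : ∀ ζ : ℂ, ζ.re ∈ Icc l 0 → m ≤ ‖H ζ - ζ‖) (hm₀ : 0 < m) {A S t₀ : ℝ}
    (hA : A ≤ t₀) (hS : t₀ + 1 ≤ S) (ht₀ : ∀ t ∈ Icc t₀ (t₀ + 1), 0 ≤ (a + t * w).re)
    (hcirc : ∀ s ∈ Icc A S, ∀ t ∈ Icc A S, 0 ≤ (a + s * w).re → 0 ≤ (a + t * w).re → t ≤ s + 1)
    (hlow : ∀ t ∈ Icc A S, Real.exp l ≤ ‖(g.symm (diskCover (a + t * w)) : ℂ)‖) :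
    ∃ c : ℝ → ℂ, IsPseudoOrbit H l m c A S ∧
      ∀ t ∈ Icc A S, Real.exp (c t).re = ‖(g.symm (diskCover (a + t * w)) : ℂ)‖ := by
  obtain ⟨c, hcc, hc⟩ := exists_log_mem_strip (V := fun t : ℝ => g.symm (diskCover (a + t * w)))
    (g.symm.continuous.comp (continuous_diskCover.comp (by fun_prop))) hlow
  have hsub : ∀ t ∈ Icc A (S - 1), t ∈ Icc A S ∧ t + 1 ∈ Icc A S := fun t ht =>
    ⟨⟨ht.1, by linarith [ht.2]⟩, by linarith [ht.1], by linarith [ht.2]⟩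
  have hnear : ∀ t ∈ Icc A (S - 1), ‖H (c t) - c (t + 1)‖ < m := by
    refine norm_sub_lt_of_norm_exp_sub_lt isPreconnected_Icc
      (hH.continuousOn.comp (hcc.mono fun t ht => (hsub t ht).1) fun t ht =>
        (hc t (hsub t ht).1).1)
      (hcc.comp (by fun_prop) fun t ht => (hsub t ht).2) (fun t ht => ?_)
      ⟨hA, by linarith⟩ ?_
    · refine (hw.norm_exp_lift_sub_exp_lt hH (hc t (hsub t ht).1)
        (hc _ (hsub t ht).2)).trans_le ?_
      rw [norm_exp]
      gcongr
      exact (hc _ (hsub t ht).2).1.1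
    · exact hw.lift_apply_eq hH hl (hcc.mono (Icc_subset_Icc hA hS))
        (fun t ht => hc t (Icc_subset_Icc hA hS ht)) ht₀
  refine ⟨c, ⟨by linarith, hcc, fun t ht => (hc t ht).1, ?_, fun t ht => ?_⟩,
    fun t ht => by rw [← (hc t ht).2, coe_diskCover (hc t ht).1.2, norm_exp]⟩
  · intro s t hs hst ht heq
    have hs' : s ∈ Icc A S := ⟨hs, by linarith⟩
    have ht' : t ∈ Icc A S := ⟨by linarith, ht⟩
    obtain ⟨hs₀, ht₀⟩ := re_spiral_nonneg_of_apply_eq hw.re_ne_zero (by linarith : s < t).ne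
      (hc s hs').2 (hc t ht').2 heq
    obtain rfl : t = s + 1 := le_antisymm (hcirc s hs' t ht' hs₀ ht₀) hst
    have hlt := hnear s ⟨hs, by linarith⟩
    rw [← heq] at hlt
    exact hlt.not_ge (hm _ (hc s hs').1)
  · rw [norm_sub_rev]
    exact hnear t ht

theorem exists_last_eq {N : ℝ → ℝ} (hN : Continuous N) {p q v : ℝ} (hpq : p ≤ q) (hp : N p ≤ v)
    (hq : v ≤ N q) : ∃ A ∈ Icc p q, N A = v ∧ ∀ t ∈ Icc A q, v ≤ N t := by
  obtain ⟨A, ⟨hA, hAv⟩, hmax⟩ := (isCompact_Icc.inter_right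
    (isClosed_singleton.preimage hN)).exists_isGreatest
      (intermediate_value_Icc hpq hN.continuousOn ⟨hp, hq⟩)
  refine ⟨A, hA, hAv, fun t ht => ?_⟩
  by_contra! hlt
  obtain ⟨x, hx, hxv⟩ := intermediate_value_Icc ht.2 hN.continuousOn ⟨hlt.le, hq⟩
  obtain rfl : t = A := le_antisymm (hx.1.trans (hmax ⟨⟨hA.1.trans (ht.1.trans hx.1), hx.2⟩, hxv⟩))
    ht.1
  exact hlt.ne hAv

theorem exists_first_eq {N : ℝ → ℝ} (hN : Continuous N) {p q v : ℝ} (hpq : p ≤ q) (hp : v ≤ N p)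
    (hq : N q ≤ v) : ∃ B ∈ Icc p q, N B = v ∧ ∀ t ∈ Icc p B, v ≤ N t := by
  obtain ⟨A, hA, hAv, hlast⟩ := exists_last_eq (N := fun t => N (-t)) (by fun_prop)
    (neg_le_neg hpq) (by simpa using hq) (by simpa using hp)
  refine ⟨-A, ⟨le_neg_of_le_neg hA.2, neg_le_of_neg_le hA.1⟩, hAv, fun t ht => ?_⟩
  simpa using hlast (-t) ⟨le_neg_of_le_neg ht.2, neg_le_neg ht.1⟩

theorem PreservesCircle.norm_symm_diskCover (hg : PreservesCircle g) {ζ : ℂ} (hζ : 0 ≤ ζ.re) :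
    ‖(g.symm (diskCover ζ) : ℂ)‖ = 1 := by
  rw [hg.symm, norm_diskCover, min_eq_right hζ, Real.exp_zero]

theorem IsSpiralVelocity.exists_outward_isPseudoOrbit (hw : IsSpiralVelocity g θ H l m b w)
    (hH : IsCoverLift (conjRotation g θ) H (Icc l 0)) (hl : l < 0)
    (hm : ∀ ζ : ℂ, ζ.re ∈ Icc l 0 → m ≤ ‖H ζ - ζ‖) (hm₀ : 0 < m) (hg : PreservesCircle g)
    (hw₀ : 0 < w.re) (ha : a.re ≤ 0) (ha₀ : (g.symm (diskCover a) : ℂ) = 0) :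
    ∃ c A S, IsPseudoOrbit H l m c A S ∧ (c A).re = l ∧ (c (S - 1)).re = 0 ∧ (c S).re = 0 := by
  set T := -a.re / w.re with hT
  have hre (t : ℝ) : (a + t * w).re = w.re * (t - T) := by
    rw [hT, mul_sub, mul_div_cancel₀ _ hw₀.ne', add_re, re_ofReal_mul]
    ring
  have hcirc {t : ℝ} (ht : T ≤ t) : 0 ≤ (a + t * w).re := by
    rw [hre]
    exact mul_nonneg hw₀.le (sub_nonneg.2 ht)
  have hone {t : ℝ} (ht : T ≤ t) := hg.norm_symm_diskCover (hcirc ht)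
  have hl1 : Real.exp l ≤ 1 := Real.exp_le_one_iff.2 hl.le
  obtain ⟨A, hA, hAl, hlow⟩ := exists_last_eq (p := 0) (q := T) (v := Real.exp l)
    (N := fun t : ℝ => ‖(g.symm (diskCover (a + t * w)) : ℂ)‖)
    (continuous_subtype_val.comp (g.symm.continuous.comp
      (continuous_diskCover.comp (by fun_prop)))).norm (div_nonneg (neg_nonneg.2 ha) hw₀.le)
    (by simpa [ha₀] using (Real.exp_pos l).le) (hl1.trans_eq (hone le_rfl).symm)
  obtain ⟨c, hc, hcnorm⟩ := hw.exists_isPseudoOrbit hH hl.le hm hm₀ (a := a) (A := A) (S := T + 1)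
    hA.2 le_rfl (fun t ht => hcirc ht.1)
    (fun s _ t ht hs₀ _ => by
      rw [hre, mul_nonneg_iff_of_pos_left hw₀] at hs₀
      linarith [ht.2])
    (fun t ht => (le_total t T).elim (fun h => hlow t ⟨ht.1, h⟩)
      fun h => hl1.trans_eq (hone h).symm)
  refine ⟨c, A, T + 1, hc, Real.exp_injective ?_, Real.exp_eq_one_iff _ |>.1 ?_,
    Real.exp_eq_one_iff _ |>.1 ?_⟩
  · rw [hcnorm A ⟨le_rfl, by linarith [hA.2]⟩, hAl]
  · rw [add_sub_cancel_right, hcnorm T ⟨hA.2, by linarith⟩, hone le_rfl]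
  · rw [hcnorm (T + 1) ⟨by linarith [hA.2], le_rfl⟩, hone (by linarith)]

theorem IsSpiralVelocity.exists_inward_isPseudoOrbit (hw : IsSpiralVelocity g θ H l m b w)
    (hH : IsCoverLift (conjRotation g θ) H (Icc l 0)) (hl : l < 0)
    (hm : ∀ ζ : ℂ, ζ.re ∈ Icc l 0 → m ≤ ‖H ζ - ζ‖) (hm₀ : 0 < m) (hg : PreservesCircle g)
    (hw₀ : w.re < 0) (ha : a.re ≤ 0) (ha₀ : (g.symm (diskCover a) : ℂ) = 0) :
    ∃ c B S, IsPseudoOrbit H l m c B S ∧ (c B).re = 0 ∧ (c S).re = l := by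
  set T := -a.re / w.re with hT
  have hre (t : ℝ) : (a + t * w).re = w.re * (t - T) := by
    rw [hT, mul_sub, mul_div_cancel₀ _ hw₀.ne, add_re, re_ofReal_mul]
    ring
  have hcirc {t : ℝ} (ht : t ≤ T) : 0 ≤ (a + t * w).re := by
    rw [hre]
    exact mul_nonneg_of_nonpos_of_nonpos hw₀.le (sub_nonpos.2 ht)
  have hone {t : ℝ} (ht : t ≤ T) := hg.norm_symm_diskCover (hcirc ht)
  have hl1 : Real.exp l ≤ 1 := Real.exp_le_one_iff.2 hl.le
  obtain ⟨S, hS, hSl, hlow⟩ := exists_first_eq (p := T) (q := 0) (v := Real.exp l)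
    (N := fun t : ℝ => ‖(g.symm (diskCover (a + t * w)) : ℂ)‖)
    (continuous_subtype_val.comp (g.symm.continuous.comp
      (continuous_diskCover.comp (by fun_prop)))).norm
    (div_nonpos_of_nonneg_of_nonpos (neg_nonneg.2 ha) hw₀.le)
    (hl1.trans_eq (hone le_rfl).symm) (by simpa [ha₀] using (Real.exp_pos l).le)
  obtain ⟨c, hc, hcnorm⟩ := hw.exists_isPseudoOrbit hH hl.le hm hm₀ (a := a) (A := T - 1) (S := S)
    le_rfl (by linarith [hS.1]) (fun t ht => hcirc (by linarith [ht.2]))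
    (fun s hs t _ _ ht₀ => by
      rw [hre] at ht₀
      linarith [hs.1, nonpos_of_mul_nonneg_right ht₀ hw₀])
    (fun t ht => (le_total T t).elim (fun h => hlow t ⟨h, ht.2⟩)
      fun h => hl1.trans_eq (hone h).symm)
  refine ⟨c, T - 1, S, hc, Real.exp_eq_one_iff _ |>.1 ?_, Real.exp_injective ?_⟩
  · rw [hcnorm (T - 1) ⟨le_rfl, by linarith [hS.1]⟩, hone (by linarith)]
  · rw [hcnorm S ⟨by linarith [hS.1], le_rfl⟩, hSl]

theorem PreservesCircle.exists_isSpiralVelocity (hg : PreservesCircle g)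
    (hH : IsCoverLift (conjRotation g θ) H (Icc l 0)) (hl : l ≤ 0) (hm : 0 < m) :
    ∃ (b : ℝ → ℝ) (τ σ : ℝ), 0 < σ ∧
      ∀ v : ℝ, |v| = σ → IsSpiralVelocity g θ H l m b (v + τ * I) := by
  obtain ⟨b, hb, -, hsurj⟩ := hg.symm.exists_bijective_isCircleLift
  have hcircle (x : Disk) : ‖(x : ℂ)‖ = 1 → ‖(conjRotation g θ x : ℂ)‖ = 1 :=
    (hg.norm_conjRotation_eq_one_iff θ x).2
  have h0 : (0 : ℝ) ∈ Icc l 0 := ⟨hl, le_rfl⟩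
  obtain ⟨τ, hτ, hbτ⟩ := hb.exists_translation hsurj (hH.isCircleLift h0 hcircle)
  obtain ⟨δ, hδ, hdist⟩ := Metric.uniformContinuous_iff.1
    (CompactSpace.uniformContinuous_of_continuous g.symm.continuous)
    (Real.exp l * min (1 / 2) (m / 2)) (by positivity)
  refine ⟨b, τ, δ / 2, half_pos hδ, fun v hv => ⟨hb, fun t => ?_, by simpa using hτ, ?_, ?_⟩⟩
  · rw [hH.apply_mul_I h0 hcircle, hbτ]
    simp
  · simpa using abs_pos.1 (hv ▸ half_pos hδ)
  · intro x y hxy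
    refine hdist (hxy.trans_lt ?_)
    simpa [hv] using half_lt_self hδ

end Spiral

-- The orbits of the rotation that spiral slowly from `g 0` out to the circle and back from the
-- circle to `g 0` lift to pseudo-orbits crossing the strip in both directions.
theorem IsStripTwist.false_of_isCoverLift_conjRotation {g : Disk ≃ₜ Disk} {θ l l' m s : ℝ}
    {H : ℂ → ℂ} (hH : IsStripTwist H l l' m s) (hg : PreservesCircle g)
    (hlift : IsCoverLift (conjRotation g θ) H (Icc l 0)) {z₀ : Disk} (hz₀ : (z₀ : ℂ) = 0)
    (hgz₀ : (g z₀ : ℂ) ≠ 0) : False := by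
  have hl : l < 0 := hH.left_lt.trans hH.left_neg
  obtain ⟨a, ha, hga⟩ := exists_diskCover_eq hgz₀
  have ha₀ : (g.symm (diskCover a) : ℂ) = 0 := by rw [hga, g.symm_apply_apply, hz₀]
  obtain ⟨b, τ, σ, hσ, hw⟩ := hg.exists_isSpiralVelocity hlift hl.le hH.pos
  obtain ⟨c, A, S, hc, hcA, hcS', hcS⟩ := (hw σ (abs_of_pos hσ)).exists_outward_isPseudoOrbit
    hlift hl hH.le_norm_sub hH.pos hg (by simpa using hσ) ha ha₀
  obtain ⟨d, B, T, hd, hdB, hdT⟩ :=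
    (hw (-σ) (by rw [abs_neg, abs_of_pos hσ])).exists_inward_isPseudoOrbit
      hlift hl hH.le_norm_sub hH.pos hg (by simpa using hσ) ha ha₀
  exact hH.false_of_isPseudoOrbit hc hcA hcS' hcS hd hdB hdT

/-! ### Limits of conjugates of rotations -/

/-- The `n`-th iterate of a continuous map, as a bundled continuous map. -/
def iterateMap {X : Type*} [TopologicalSpace X] (f : C(X, X)) (n : ℕ) : C(X, X) :=
  ⟨f^[n], f.continuous.iterate n⟩

theorem iterateMap_succ {X : Type*} [TopologicalSpace X] (f : C(X, X)) (n : ℕ) :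
    iterateMap f (n + 1) = f.comp (iterateMap f n) :=
  ContinuousMap.ext fun x => Function.iterate_succ_apply' f n x

theorem tendsto_iterateMap {X ι : Type*} [TopologicalSpace X] [LocallyCompactSpace X]
    {p : Filter ι} {F : ι → C(X, X)} {f : C(X, X)} (h : Tendsto F p (𝓝 f)) (n : ℕ) :
    Tendsto (fun k => iterateMap (F k) n) p (𝓝 (iterateMap f n)) := by
  induction n with
  | zero => exact tendsto_const_nhds
  | succ n ih => simpa only [iterateMap_succ] using h.compCM ih

theorem iterateMap_conjRotation (g : Disk ≃ₜ Disk) (θ : ℝ) (n : ℕ) :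
    iterateMap (conjRotation g θ) n = conjRotation g (n * θ) := by
  induction n with
  | zero =>
    exact ContinuousMap.ext fun x => by simp [iterateMap, conjRotation_apply, diskRotation_zero]
  | succ n ih =>
    refine ContinuousMap.ext fun x => ?_
    rw [iterateMap_succ, ih, Nat.cast_succ, add_mul, one_mul, add_comm]
    simp only [ContinuousMap.comp_apply, conjRotation_apply, g.apply_symm_apply, diskRotation_add]

theorem tendsto_iterate_of_tendstoUniformly {X ι : Type*} [UniformSpace X] {p : Filter ι}
    {F : ι → X → X} {f : X → X} (h : TendstoUniformly F f p) (hf : Continuous f) {x : X}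
    (hx : f x = x) (n : ℕ) : Tendsto (fun k => (F k)^[n] x) p (𝓝 x) := by
  induction n with
  | zero => exact tendsto_const_nhds
  | succ n ih =>
    simp only [Function.iterate_succ_apply']
    simpa only [hx] using h.tendsto_comp hf.continuousAt ih

theorem eventually_forall_norm_coe_sub_lt {ι : Type*} {p : Filter ι} {F : ι → C(Disk, Disk)}
    {f : C(Disk, Disk)} (h : Tendsto F p (𝓝 f)) {ε : ℝ} (hε : 0 < ε) :
    ∀ᶠ k in p, ∀ x, ‖(F k x : ℂ) - f x‖ < ε := by
  filter_upwards [Metric.tendstoUniformly_iff.1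
    (ContinuousMap.tendsto_iff_tendstoUniformly.1 h) ε hε] with k hk x
  rw [← dist_eq_norm, ← Subtype.dist_eq, dist_comm]
  exact hk x

/-- `ψ` is the uniform limit of conjugates of the rotations by the angles `θ k → θ'`. -/
structure IsRotationLimit (g : ℕ → Disk ≃ₜ Disk) (θ : ℕ → ℝ) (θ' : ℝ) (ψ : C(Disk, Disk)) :
    Prop where
  preservesCircle : ∀ k, PreservesCircle (g k)
  tendsto_angle : Tendsto θ atTop (𝓝 θ')
  tendsto : Tendsto (fun k => conjRotation (g k) (θ k)) atTop (𝓝 ψ)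

namespace IsRotationLimit

variable {g : ℕ → Disk ≃ₜ Disk} {θ : ℕ → ℝ} {θ' : ℝ} {ψ : C(Disk, Disk)}

theorem iterateMap (h : IsRotationLimit g θ θ' ψ) (n : ℕ) :
    IsRotationLimit g (fun k => n * θ k) (n * θ') (iterateMap ψ n) where
  preservesCircle := h.preservesCircle
  tendsto_angle := h.tendsto_angle.const_mul _
  tendsto := by simpa only [iterateMap_conjRotation] using tendsto_iterateMap h.tendsto n

theorem tendsto_apply (h : IsRotationLimit g θ θ' ψ) (x : Disk) :
    Tendsto (fun k => conjRotation (g k) (θ k) x) atTop (𝓝 (ψ x)) :=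
  (ContinuousMap.tendsto_iff_tendstoUniformly.1 h.tendsto).tendsto_at x

theorem norm_apply_eq_one (h : IsRotationLimit g θ θ' ψ) {x : Disk} (hx : ‖(x : ℂ)‖ = 1) :
    ‖(ψ x : ℂ)‖ = 1 := by
  refine tendsto_nhds_unique ((continuous_subtype_val.tendsto _).comp (h.tendsto_apply x)).norm ?_
  simp only [Function.comp_apply, ((h.preservesCircle _).norm_conjRotation_eq_one_iff _ x).2 hx]
  exact tendsto_const_nhds

theorem exists_isCircleLift_tendstoUniformly (h : IsRotationLimit g θ θ' ψ) {f : ℝ → ℝ}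
    (hf : IsCircleLift ψ f) :
    ∃ F : ℕ → ℝ → ℝ, (∀ᶠ k in atTop, IsCircleLift (conjRotation (g k) (θ k)) (F k)) ∧
      TendstoUniformly F f atTop := by
  set q : ℕ → ℝ → ℂ := fun k t =>
    conjRotation (g k) (θ k) (diskCover (t * I)) / ψ (diskCover (t * I)) with hq
  have hψ (t : ℝ) : ‖(ψ (diskCover (t * I)) : ℂ)‖ = 1 :=
    h.norm_apply_eq_one (norm_diskCover_mul_I t)
  have hψ₀ (t : ℝ) : (ψ (diskCover (t * I)) : ℂ) ≠ 0 := norm_ne_zero_iff.1 (by simp [hψ])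
  have hclose {ε : ℝ} (hε : 0 < ε) : ∀ᶠ k in atTop, ∀ t, ‖q k t - 1‖ < ε := by
    filter_upwards [eventually_forall_norm_coe_sub_lt h.tendsto hε] with k hk t
    rw [hq, div_sub_one (hψ₀ t), norm_div, hψ, div_one]
    exact hk _
  refine ⟨fun k t => f t + (log (q k t)).im, ?_, ?_⟩
  · filter_upwards [hclose one_half_pos] with k hk
    have hcont (f : C(Disk, Disk)) : Continuous fun t : ℝ => (f (diskCover (t * I)) : ℂ) :=
      continuous_subtype_val.comp (f.continuous.comp (continuous_diskCover.comp (by fun_prop)))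
    have hslit (t : ℝ) := mem_slitPlane_of_norm_sub_one_lt (hk t)
    refine ⟨hf.continuous.add (continuous_im.comp
      (((hcont _).div (hcont ψ) hψ₀).clog hslit)), fun t => Subtype.ext ?_⟩
    have hlog : ((log (q k t)).im : ℂ) * I = log (q k t) := by
      have hnorm : ‖q k t‖ = 1 := by
        rw [hq, norm_div, hψ, div_one]
        exact ((h.preservesCircle k).norm_conjRotation_eq_one_iff _ _).2 (norm_diskCover_mul_I t)
      apply Complex.ext <;> simp [log_re, hnorm]
    rw [coe_diskCover_mul_I, ofReal_add, add_mul, exp_add, hlog,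
      exp_log (slitPlane_ne_zero (hslit t)), ← coe_diskCover_mul_I, hf.diskCover_eq,
      mul_div_cancel₀ _ (hψ₀ t)]
  · refine Metric.tendstoUniformly_iff.2 fun ε hε => ?_
    filter_upwards [hclose (by positivity : 0 < min (1 / 2) (ε / 2))] with k hk t
    rw [dist_self_add_right, Real.norm_eq_abs]
    exact (abs_im_le_norm _).trans_lt (norm_log_lt_of_norm_sub_one_lt (hk t))

end IsRotationLimit

-- The boundary lift of a conjugate of a rotation is conjugate to a translation by `τ`; an orbit
-- that stays within a period for time `n` therefore forces `τ` to be small.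
theorem PreservesCircle.exists_translation_mul_abs_lt {g : Disk ≃ₜ Disk} (hg : PreservesCircle g)
    {θ : ℝ} {F : ℝ → ℝ} (hF : IsCircleLift (conjRotation g θ) F) :
    ∃ τ : ℝ, exp (τ * I) = exp (θ * I) ∧
      ∀ (x : ℝ) (n : ℕ), |F^[n] x - x| < 2 * π → n * |τ| < 2 * π := by
  obtain ⟨b, hb, hinj, hsurj⟩ := hg.symm.exists_bijective_isCircleLift
  obtain ⟨τ, hτ, hbτ⟩ := hb.exists_translation hsurj hF
  refine ⟨τ, hτ, fun x n hx => ?_⟩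
  obtain ⟨t, rfl⟩ := hsurj x
  have hiter (n : ℕ) : F^[n] (b t) = b (t + n * τ) := by
    induction n with
    | zero => simp
    | succ n ih =>
      rw [Function.iterate_succ_apply', ih, hbτ]
      push_cast
      ring_nf
  rw [hiter] at hx
  by_contra! hle
  refine hx.not_ge ?_
  rcases le_total 0 τ with h | h
  · rw [abs_of_nonneg h] at hle
    exact hb.two_pi_le_abs_sub hinj (by linarith)
  · rw [abs_of_nonpos h] at hle
    rw [abs_sub_comm]
    exact hb.two_pi_le_abs_sub hinj (by linarith)

theorem IsRotationLimit.apply_ne_of_norm_eq_one {g : ℕ → Disk ≃ₜ Disk} {θ : ℕ → ℝ} {θ' : ℝ}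
    {ψ : C(Disk, Disk)} (h : IsRotationLimit g θ θ' ψ) (hθ' : exp (θ' * I) ≠ 1) {x : Disk}
    (hx : ‖(x : ℂ)‖ = 1) : ψ x ≠ x := by
  intro hfix
  obtain ⟨t, rfl⟩ := exists_diskCover_mul_I_eq hx
  obtain ⟨f, hf, hft⟩ := (exists_isCircleLift ψ.continuous
    fun _ => h.norm_apply_eq_one).choose_spec.exists_apply_eq_self hfix
  obtain ⟨F, hF, hFf⟩ := h.exists_isCircleLift_tendstoUniformly hf
  have hcont : Continuous fun t : ℝ => exp (t * I) := by fun_prop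
  refine hθ' (tendsto_nhds_unique ((hcont.tendsto θ').comp h.tendsto_angle) ?_)
  refine Metric.tendsto_nhds.2 fun ε hε => ?_
  obtain ⟨δ, hδ, hδε⟩ := Metric.continuousAt_iff.1 (hcont.continuousAt (x := 0)) ε hε
  obtain ⟨n, hn⟩ := exists_nat_gt (2 * π / δ)
  have hn₀ : (0 : ℝ) < n := lt_trans (by positivity) hn
  filter_upwards [hF, Metric.tendsto_nhds.1
    (tendsto_iterate_of_tendstoUniformly hFf hf.continuous hft n) (2 * π) (by positivity)]
    with k hk hclose
  obtain ⟨τ, hτ, hsmall⟩ := (h.preservesCircle k).exists_translation_mul_abs_lt hk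
  have hτδ : |τ| < δ := by
    rw [div_lt_iff₀ hδ] at hn
    exact lt_of_mul_lt_mul_left ((hsmall t n hclose).trans hn) hn₀.le
  simpa [← hτ] using hδε (x := τ) (by simpa using hτδ)

/-! ### Area-preserving linear maps with a fixed vector -/

theorem continuousLinearMap_det_eq (A : ℂ →L[ℝ] ℂ) :
    A.det = (A 1).re * (A I).im - (A I).re * (A 1).im := by
  rw [ContinuousLinearMap.det, ← LinearMap.det_toMatrix basisOneI, Matrix.det_fin_two]
  simp [LinearMap.toMatrix_apply]

theorem im_conj_apply_mul_apply (A : ℂ →L[ℝ] ℂ) (v z : ℂ) :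
    (conj (A v) * A z).im = A.det * (conj v * z).im := by
  have hA (z : ℂ) : A z = z.re * A 1 + z.im * A I := by
    rw [← real_smul, ← real_smul, ← map_smul, ← map_smul, ← map_add]
    simp
  rw [continuousLinearMap_det_eq, hA v, hA z]
  simp
  ring

-- Such an `A` is unipotent, so its only eigenvalue is `1`.
theorem apply_div_mem_slitPlane {A : ℂ →L[ℝ] ℂ} (hA : A.det = 1) {v : ℂ} (hv : v ≠ 0)
    (hAv : A v = v) {z : ℂ} (hz : z ≠ 0) : A z / z ∈ slitPlane := by
  rw [mem_slitPlane_iff_not_le_zero]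
  intro hle
  obtain ⟨r, hr, hr₀⟩ : ∃ r : ℝ, A z = r * z ∧ r ≤ 0 := by
    refine ⟨(A z / z).re, (div_eq_iff hz).1 (Complex.ext rfl ?_), (Complex.le_def.1 hle).1⟩
    simpa using (Complex.le_def.1 hle).2
  have harea : (conj v * z).im = 0 := by
    have h := im_conj_apply_mul_apply A v z
    rw [hA, hAv, hr, mul_left_comm, im_ofReal_mul] at h
    nlinarith
  have hcoll : z = (z / v).re • v := by
    have him : (z / v).im = 0 := by
      rw [div_eq_mul_inv, inv_def, ← mul_assoc, im_mul_ofReal, mul_comm z, harea, zero_mul]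
    rw [real_smul, ← div_eq_iff hv]
    exact Complex.ext rfl (by simpa using him)
  have hfix : A z = z := by rw [hcoll, map_smul, hAv]
  rw [hr] at hfix
  have : r = 1 := by exact_mod_cast mul_right_cancel₀ hz (hfix.trans (one_mul z).symm)
  linarith

/-! ### Lifts near a fixed center -/

section Quotient

variable {F : ℂ → ℂ} {A : ℂ →L[ℝ] ℂ}

theorem apply_exp_div_exp (A : ℂ →L[ℝ] ℂ) (ζ : ℂ) :
    A (exp ζ) / exp ζ = A (exp (ζ.im * I)) / exp (ζ.im * I) := by
  have hexp : exp ζ = Real.exp ζ.re • exp (ζ.im * I) := by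
    rw [real_smul, ofReal_exp, ← exp_add, re_add_im]
  rw [hexp, map_smul, real_smul, real_smul,
    mul_div_mul_left _ _ (ofReal_ne_zero.2 (Real.exp_ne_zero _))]

theorem tendsto_apply_exp_div_exp_sub (hF : HasFDerivAt F A 0) (hF₀ : F 0 = 0) :
    Tendsto (fun ζ => F (exp ζ) / exp ζ - A (exp ζ) / exp ζ) (comap re atBot) (𝓝 0) := by
  simp only [← sub_div]
  simpa [Function.comp_def, hF₀] using
    (hF.isLittleO.comp_tendsto tendsto_exp_comap_re_atBot).tendsto_div_nhds_zero

theorem eventually_apply_exp_div_exp_mem_slitPlane (hF : HasFDerivAt F A 0) (hF₀ : F 0 = 0)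
    (hA : ∀ z ≠ 0, A z / z ∈ slitPlane) :
    ∀ᶠ ζ in comap re atBot, F (exp ζ) / exp ζ ∈ slitPlane := by
  have hne : ∀ z ∈ sphere (0 : ℂ) 1, z ≠ 0 := fun z hz => ne_of_mem_sphere hz one_ne_zero
  obtain ⟨δ, hδ, hsub⟩ := ((isCompact_sphere (0 : ℂ) 1).image_of_continuousOn
    (f := fun z => A z / z)
    (A.continuous.continuousOn.div continuousOn_id hne)).exists_thickening_subset_open
      isOpen_slitPlane (image_subset_iff.2 fun z hz => hA z (hne z hz))
  filter_upwards [Metric.tendsto_nhds.1 (tendsto_apply_exp_div_exp_sub hF hF₀) δ hδ] with ζ hζ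
  refine hsub (mem_thickening_iff.2 ⟨_, ⟨exp (ζ.im * I), by simp, rfl⟩, ?_⟩)
  rwa [dist_zero_right, apply_exp_div_exp, ← dist_eq_norm] at hζ

/-- The filter of logarithms `ζ` of points `exp ζ` that tend to `0` from the direction `α`. -/
def logDirection (α : ℝ) : Filter ℂ := comap re atBot ⊓ comap im (𝓝 α)

instance (α : ℝ) : (logDirection α).NeBot := by
  have h : Tendsto (fun x : ℝ => (x + α * I : ℂ)) atBot (logDirection α) :=
    tendsto_inf.2 ⟨tendsto_comap_iff.2 (tendsto_id.congr fun x => by simp),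
      tendsto_comap_iff.2 (by simp [Function.comp_def])⟩
  exact h.neBot

theorem tendsto_apply_exp_div_exp_of_apply_eq (hF : HasFDerivAt F A 0) (hF₀ : F 0 = 0) {v : ℂ}
    (hv : v ≠ 0) (hAv : A v = v) :
    Tendsto (fun ζ => F (exp ζ) / exp ζ) (logDirection (arg v)) (𝓝 1) := by
  have hlin : Tendsto (fun ζ : ℂ => A (exp ζ) / exp ζ) (logDirection (arg v)) (𝓝 1) := by
    have hcont : Continuous fun t : ℝ => A (exp (t * I)) / exp (t * I) := by
      fun_prop (disch := simp)
    have hval : A (exp (arg v * I)) / exp (arg v * I) = 1 := by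
      rw [← log_im v, ← apply_exp_div_exp, exp_log hv, hAv, div_self hv]
    refine Tendsto.congr (fun ζ => (apply_exp_div_exp A ζ).symm) ?_
    rw [← hval]
    exact (hcont.tendsto _).comp (tendsto_comap.mono_left inf_le_right)
  simpa [logDirection] using
    ((tendsto_apply_exp_div_exp_sub hF hF₀).mono_left inf_le_left).add hlin

end Quotient

theorem exists_neg_forall_re_le {p : ℂ → Prop} (h : ∀ᶠ ζ in comap re atBot, p ζ) :
    ∃ ℓ < 0, ∀ ζ : ℂ, ζ.re ≤ ℓ → p ζ := by
  obtain ⟨ℓ, hℓ⟩ := eventually_atBot.1 (eventually_comap.1 h)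
  exact ⟨min ℓ (-1), (min_le_right _ _).trans_lt (by norm_num), fun ζ hζ =>
    hℓ _ (hζ.trans (min_le_left _ _)) ζ rfl⟩

/-- `G` is the lift of `f` along `diskCover` that asymptotically fixes the points tending to `0`
from the direction `α`. -/
structure IsDirectedLift (f : Disk → Disk) (G : ℂ → ℂ) (α : ℝ) : Prop
    extends IsCoverLift f G (Iic 0) where
  tendsto_sub : Tendsto (fun ζ => G ζ - ζ) (logDirection α) (𝓝 0)

theorem IsCoverLift.comp {f f' : Disk → Disk} {G G' : ℂ → ℂ} (h : IsCoverLift f G (Iic 0))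
    (h' : IsCoverLift f' G' (Iic 0)) : IsCoverLift (f ∘ f') (G ∘ G') (Iic 0) where
  continuousOn := h.continuousOn.comp h'.continuousOn fun _ hζ => h'.re_nonpos hζ
  exp_eq ζ hζ := by
    rw [Function.comp_apply, h.exp_eq _ (h'.re_nonpos hζ), h'.diskCover_eq hζ,
      Function.comp_apply]
  add_int_mul ζ n hζ := by
    rw [Function.comp_apply, h'.add_int_mul _ _ hζ, h.add_int_mul _ _ (h'.re_nonpos hζ),
      Function.comp_apply]

theorem IsDirectedLift.comp {f f' : Disk → Disk} {G G' : ℂ → ℂ} {α : ℝ}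
    (h : IsDirectedLift f G α) (h' : IsDirectedLift f' G' α) :
    IsDirectedLift (f ∘ f') (G ∘ G') α where
  toIsCoverLift := h.toIsCoverLift.comp h'.toIsCoverLift
  tendsto_sub := by
    have hG' : Tendsto G' (logDirection α) (logDirection α) := by
      have hre : Tendsto re (logDirection α) atBot := tendsto_comap.mono_left inf_le_left
      have him : Tendsto im (logDirection α) (𝓝 α) := tendsto_comap.mono_left inf_le_right
      refine tendsto_inf.2 ⟨tendsto_comap_iff.2 ?_, tendsto_comap_iff.2 ?_⟩
      · simpa [Function.comp_def] using
          hre.atBot_add ((continuous_re.tendsto 0).comp h'.tendsto_sub)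
      · simpa [Function.comp_def] using
          him.add ((continuous_im.tendsto 0).comp h'.tendsto_sub)
    simpa using (h.tendsto_sub.comp hG').add h'.tendsto_sub

theorem IsDirectedLift.iterate {f : Disk → Disk} {G : ℂ → ℂ} {α : ℝ} (h : IsDirectedLift f G α)
    (n : ℕ) : IsDirectedLift f^[n] G^[n] α := by
  induction n with
  | zero => exact ⟨⟨continuousOn_id, fun _ hζ => (coe_diskCover hζ).symm, fun _ _ _ => rfl⟩,
      by simp⟩
  | succ n ih =>
    rw [Function.iterate_succ, Function.iterate_succ]
    exact ih.comp h

section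

variable {f : C(Disk, Disk)} {F : ℂ → ℂ} {A : ℂ →L[ℝ] ℂ} {G : ℂ → ℂ} {ℓ α : ℝ}

theorem exists_int_eqOn_add_log (hF : Function.Semiconj ((↑) : Disk → ℂ) f F) (hℓ : ℓ ≤ 0)
    (hslit : ∀ ζ : ℂ, ζ.re ≤ ℓ → F (exp ζ) / exp ζ ∈ slitPlane)
    (hG : ContinuousOn G (re ⁻¹' Iic 0))
    (hGexp : ∀ ζ : ℂ, ζ.re ≤ 0 → exp (G ζ) = f (diskCover ζ)) :
    ∃ n : ℤ, ∀ ζ : ℂ, ζ.re ≤ ℓ → G ζ = ζ + log (F (exp ζ) / exp ζ) + n * (2 * π * I) := by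
  have hcover (ζ : ℂ) (hζ : ζ.re ≤ ℓ) : (f (diskCover ζ) : ℂ) = F (exp ζ) := by
    rw [← coe_diskCover (hζ.trans hℓ), hF]
  have hcont : ContinuousOn (fun ζ => F (exp ζ) / exp ζ) (re ⁻¹' Iic ℓ) :=
    ((continuous_subtype_val.comp (f.continuous.comp continuous_diskCover)).continuousOn.congr
      fun ζ hζ => (hcover ζ hζ).symm).div continuous_exp.continuousOn fun ζ _ => exp_ne_zero ζ
  refine exists_int_eqOn_of_exp_eqOn (convex_halfSpace_re_le ℓ).isPreconnected
    (hG.mono fun ζ hζ => le_trans hζ hℓ) ((continuousOn_id' _).add (hcont.clog hslit))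
    fun ζ (hζ : ζ.re ≤ ℓ) => ?_
  rw [exp_add, exp_log (slitPlane_ne_zero (hslit ζ hζ)), mul_div_cancel₀ _ (exp_ne_zero ζ),
    hGexp ζ (hζ.trans hℓ), hcover ζ hζ]

theorem exists_isCoverLift (hF : Function.Semiconj ((↑) : Disk → ℂ) f F) (hℓ : ℓ ≤ 0)
    (hslit : ∀ ζ : ℂ, ζ.re ≤ ℓ → F (exp ζ) / exp ζ ∈ slitPlane)
    (hf : ∀ x : Disk, (f x : ℂ) = 0 → (x : ℂ) = 0) :
    ∃ G, IsCoverLift f G (Iic 0) ∧ ∀ ζ : ℂ, ζ.re ≤ ℓ → G ζ = ζ + log (F (exp ζ) / exp ζ) := by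
  obtain ⟨L, hLc, hL⟩ : ∃ L, ContinuousOn L (re ⁻¹' Iic 0) ∧
      ∀ ζ : ℂ, ζ.re ≤ 0 → exp (L ζ) = f (diskCover ζ) :=
    exists_continuousOn_exp_eq (convex_halfSpace_re_le 0)
      (continuous_subtype_val.comp (f.continuous.comp continuous_diskCover)).continuousOn
      fun ζ _ h => diskCover_ne_zero ζ (hf _ h)
  obtain ⟨n, hn⟩ := exists_int_eqOn_add_log hF hℓ hslit hLc hL
  have hperiod (k : ℤ) (ζ : ℂ) (hζ : ζ.re ≤ 0) :
      L (ζ + k * (2 * π * I)) = L ζ + k * (2 * π * I) := by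
    have hre (ζ : ℂ) : (ζ + k * (2 * π * I)).re = ζ.re := by simp
    obtain ⟨m, hm⟩ := exists_int_eqOn_of_exp_eqOn (convex_halfSpace_re_le 0).isPreconnected
      (L := fun ζ => L (ζ + k * (2 * π * I))) (V := L)
      (hLc.comp (by fun_prop) fun ζ hζ => (hre ζ).trans_le hζ) hLc fun ζ hζ => by
        rw [hL _ ((hre ζ).trans_le hζ), hL ζ hζ, diskCover_add_int_mul]
    have hmk := hm ℓ (by simpa using hℓ)
    rw [hn _ ((hre _).trans_le (ofReal_re ℓ).le), hn _ (ofReal_re ℓ).le, exp_add (ℓ : ℂ),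
      exp_int_mul_two_pi_mul_I, mul_one] at hmk
    rw [hm ζ hζ]
    linear_combination -hmk
  refine ⟨fun ζ => L ζ - n * (2 * π * I), ⟨hLc.sub continuousOn_const, fun ζ hζ => ?_,
    fun ζ k hζ => ?_⟩, fun ζ hζ => ?_⟩
  · rw [exp_sub, exp_int_mul_two_pi_mul_I, div_one, hL ζ hζ]
  · rw [hperiod k ζ hζ]
    ring
  · simp only [hn ζ hζ]
    ring

theorem exists_isDirectedLift (hF : Function.Semiconj ((↑) : Disk → ℂ) f F)
    (hF' : HasFDerivAt F A 0) (hF₀ : F 0 = 0) (hA : ∀ z ≠ 0, A z / z ∈ slitPlane)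
    (hf : ∀ x : Disk, (f x : ℂ) = 0 → (x : ℂ) = 0) {v : ℂ} (hv : v ≠ 0) (hAv : A v = v) :
    ∃ G, IsDirectedLift f G (arg v) := by
  obtain ⟨ℓ, hℓ, hslit⟩ := exists_neg_forall_re_le
    (eventually_apply_exp_div_exp_mem_slitPlane hF' hF₀ hA)
  obtain ⟨G, hG, hGlog⟩ := exists_isCoverLift hF hℓ.le hslit hf
  refine ⟨G, hG, ?_⟩
  have hlog := (tendsto_apply_exp_div_exp_of_apply_eq hF' hF₀ hv hAv).clog one_mem_slitPlane
  rw [log_one] at hlog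
  refine hlog.congr' ?_
  filter_upwards [(tendsto_comap.mono_left inf_le_left).eventually_le_atBot ℓ] with ζ hζ
  rw [hGlog ζ hζ, add_sub_cancel_left]

theorem IsDirectedLift.exists_abs_im_sub_lt_pi (h : IsDirectedLift f G α)
    (hF : Function.Semiconj ((↑) : Disk → ℂ) f F) (hF' : HasFDerivAt F A 0) (hF₀ : F 0 = 0)
    (hA : ∀ z ≠ 0, A z / z ∈ slitPlane) :
    ∃ ℓ < 0, ∀ ζ : ℂ, ζ.re ≤ ℓ → |(G ζ - ζ).im| < π := by
  obtain ⟨ℓ, hℓ, hslit⟩ := exists_neg_forall_re_le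
    (eventually_apply_exp_div_exp_mem_slitPlane hF' hF₀ hA)
  obtain ⟨n, hn⟩ := exists_int_eqOn_add_log hF hℓ.le hslit h.continuousOn h.exp_eq
  have hG (ζ : ℂ) (hζ : ζ.re ≤ ℓ) :
      G ζ - ζ = log (F (exp ζ) / exp ζ) + n * (2 * π * I) := by
    rw [hn ζ hζ]
    ring
  have hn₀ : (n : ℂ) * (2 * π * I) = 0 := by
    have hexp := ((continuous_exp.tendsto 0).comp h.tendsto_sub).clog
      (exp_zero.symm ▸ one_mem_slitPlane)
    have hsub := h.tendsto_sub.sub hexp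
    refine tendsto_nhds_unique (tendsto_const_nhds.congr' ?_) (by simpa using hsub)
    filter_upwards [(tendsto_comap.mono_left inf_le_left).eventually_le_atBot ℓ] with ζ hζ
    rw [hG ζ hζ, exp_add, exp_int_mul_two_pi_mul_I, mul_one,
      exp_log (slitPlane_ne_zero (hslit ζ hζ)), add_sub_cancel_left]
  refine ⟨ℓ, hℓ, fun ζ hζ => ?_⟩
  rw [hG ζ hζ, hn₀, add_zero, log_im]
  exact abs_lt.2 ⟨neg_pi_lt_arg _, (arg_le_pi _).lt_of_ne (slitPlane_arg_ne_pi (hslit ζ hζ))⟩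

end

/-! ### Approximation of lifts over a strip -/

theorem exists_isMinOn_strip {F : ℂ → ℝ} {l : ℝ} (hl : l ≤ 0)
    (hF : ContinuousOn F (re ⁻¹' Icc l 0))
    (hper : ∀ (ζ : ℂ) (n : ℤ), ζ.re ∈ Icc l 0 → F (ζ + n * (2 * π * I)) = F ζ) :
    ∃ ζ₀ ∈ re ⁻¹' Icc l 0, IsMinOn F (re ⁻¹' Icc l 0) ζ₀ := by
  have hsub : Icc l 0 ×ℂ Icc 0 (2 * π) ⊆ re ⁻¹' Icc l 0 := fun ζ hζ => hζ.1
  obtain ⟨ζ₀, hζ₀, hmin⟩ := (isCompact_Icc.reProdIm isCompact_Icc).exists_isMinOn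
    ⟨0, by simp [mem_reProdIm, hl, Real.pi_pos.le]⟩ (hF.mono hsub)
  refine ⟨ζ₀, hsub hζ₀, fun ζ hζ => ?_⟩
  have hmod := sub_toIcoDiv_zsmul_mem_Ico Real.two_pi_pos 0 ζ.im
  rw [zero_add] at hmod
  rw [mem_ofPred, ← hper ζ (-toIcoDiv Real.two_pi_pos 0 ζ.im) hζ]
  refine hmin ⟨by simpa using hζ, ?_⟩
  simpa [sub_eq_add_neg] using Ico_subset_Icc_self hmod

theorem exists_sign_mul_ge_of_periodic {f : ℝ → ℝ} (hf : Continuous f) {c : ℝ}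
    (hper : f.Periodic c) (hc : c ≠ 0) (hne : ∀ t, f t ≠ 0) :
    ∃ s : ℤ, |s| = 1 ∧ ∃ δ > 0, ∀ t, δ ≤ s * f t := by
  have hcpt := hper.compact_of_continuous hc hf
  obtain ⟨_, ⟨a, rfl⟩, ha⟩ := hcpt.exists_isLeast (range_nonempty f)
  obtain ⟨_, ⟨b, rfl⟩, hb⟩ := hcpt.exists_isGreatest (range_nonempty f)
  by_cases hpos : 0 < f a
  · exact ⟨1, by simp, f a, hpos, fun t => by simpa using ha (mem_range_self t)⟩
  by_cases hneg : f b < 0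
  · exact ⟨-1, by simp, -f b, neg_pos.2 hneg, fun t => by simpa using hb (mem_range_self t)⟩
  obtain ⟨t, ht⟩ := mem_range_of_exists_le_of_exists_ge hf ⟨a, not_lt.1 hpos⟩ ⟨b, not_lt.1 hneg⟩
  exact absurd ht (hne t)

namespace IsCoverLift

variable {f : Disk → Disk} {H : ℂ → ℂ} {K K' : Set ℝ} {l : ℝ}

theorem mono (hH : IsCoverLift f H K) (hK : K' ⊆ K) : IsCoverLift f H K' where
  continuousOn := hH.continuousOn.mono (preimage_mono hK)
  exp_eq ζ hζ := hH.exp_eq ζ (hK hζ)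
  add_int_mul ζ n hζ := hH.add_int_mul ζ n (hK hζ)

theorem exists_forall_le_re (hH : IsCoverLift f H (Icc l 0)) (hl : l ≤ 0) :
    ∃ c, ∀ ζ : ℂ, ζ.re ∈ Icc l 0 → c ≤ (H ζ).re := by
  obtain ⟨ζ₀, -, hmin⟩ := exists_isMinOn_strip hl (continuous_re.comp_continuousOn hH.continuousOn)
    fun ζ n hζ => by simp [hH.add_int_mul ζ n hζ]
  exact ⟨_, fun ζ hζ => hmin hζ⟩

theorem exists_pos_forall_le_norm_sub (hH : IsCoverLift f H (Icc l 0)) (hl : l ≤ 0)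
    (hne : ∀ ζ : ℂ, ζ.re ∈ Icc l 0 → H ζ ≠ ζ) :
    ∃ m > 0, ∀ ζ : ℂ, ζ.re ∈ Icc l 0 → m ≤ ‖H ζ - ζ‖ := by
  obtain ⟨ζ₀, hζ₀, hmin⟩ := exists_isMinOn_strip hl (hH.continuousOn.sub continuousOn_id).norm
    fun ζ n hζ => by simp [hH.add_int_mul ζ n hζ]
  exact ⟨_, norm_pos_iff.2 (sub_ne_zero.2 (hne ζ₀ hζ₀)), fun ζ hζ => hmin hζ⟩

end IsCoverLift

namespace IsRotationLimit

variable {g : ℕ → Disk ≃ₜ Disk} {θ : ℕ → ℝ} {θ' : ℝ} {ψ : C(Disk, Disk)} {G : ℂ → ℂ} {l : ℝ}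

theorem eventually_exists_isCoverLift (h : IsRotationLimit g θ θ' ψ)
    (hG : IsCoverLift ψ G (Icc l 0)) (hl : l ≤ 0) {ε : ℝ} (hε : 0 < ε) :
    ∀ᶠ k in atTop, ∃ H, IsCoverLift (conjRotation (g k) (θ k)) H (Icc l 0) ∧
      ∀ ζ : ℂ, ζ.re ∈ Icc l 0 → ‖H ζ - G ζ‖ < ε ∧
        (conjRotation (g k) (θ k) (diskCover ζ) = ψ (diskCover ζ) → H ζ = G ζ) := by
  obtain ⟨c, hc⟩ := hG.exists_forall_le_re hl
  have hψ (ζ : ℂ) (hζ : ζ.re ∈ Icc l 0) : (ψ (diskCover ζ) : ℂ) ≠ 0 := by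
    rw [← hG.exp_eq ζ hζ]
    exact exp_ne_zero _
  filter_upwards [eventually_forall_norm_coe_sub_lt h.tendsto
    (ε := Real.exp c * min (1 / 2) (ε / 2)) (by positivity)] with k hk
  set q : ℂ → ℂ := fun ζ => conjRotation (g k) (θ k) (diskCover ζ) / ψ (diskCover ζ) with hq
  have hclose (ζ : ℂ) (hζ : ζ.re ∈ Icc l 0) : ‖q ζ - 1‖ < min (1 / 2) (ε / 2) := by
    rw [hq, div_sub_one (hψ ζ hζ), norm_div, div_lt_iff₀' (norm_pos_iff.2 (hψ ζ hζ))]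
    refine (hk _).trans_le (mul_le_mul_of_nonneg_right ?_ (by positivity))
    rw [← hG.exp_eq ζ hζ, norm_exp]
    exact Real.exp_le_exp.2 (hc ζ hζ)
  have hslit (ζ : ℂ) (hζ : ζ.re ∈ Icc l 0) : q ζ ∈ slitPlane :=
    mem_slitPlane_of_norm_sub_one_lt ((hclose ζ hζ).trans_le (min_le_left _ _))
  have hcont (f : C(Disk, Disk)) : Continuous fun ζ => (f (diskCover ζ) : ℂ) :=
    continuous_subtype_val.comp (f.continuous.comp continuous_diskCover)
  refine ⟨fun ζ => G ζ + log (q ζ), ⟨hG.continuousOn.add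
    (((hcont _).continuousOn.div (hcont ψ).continuousOn hψ).clog hslit),
    fun ζ hζ => ?_, fun ζ n hζ => ?_⟩, fun ζ hζ => ⟨?_, fun heq => ?_⟩⟩
  · rw [exp_add, exp_log (slitPlane_ne_zero (hslit ζ hζ)), hG.exp_eq ζ hζ,
      mul_div_cancel₀ _ (hψ ζ hζ)]
  · simp only [hq, hG.add_int_mul ζ n hζ, diskCover_add_int_mul]
    ring
  · rw [add_sub_cancel_left]
    exact norm_log_lt_of_norm_sub_one_lt (hclose ζ hζ)
  · simp only [hq, heq, div_self (hψ ζ hζ), log_one, add_zero]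

theorem false_of_isCoverLift (h : IsRotationLimit g θ θ' ψ) {z₀ a : Disk} (hz₀ : (z₀ : ℂ) = 0)
    (hgz₀ : ∀ k, (g k z₀ : ℂ) ≠ 0) (ha : ψ a = a)
    (hfix : ∀ᶠ k in atTop, ∀ x, conjRotation (g k) (θ k) x = x → x = a)
    (hG : IsCoverLift ψ G (Iic 0)) {l' s : ℝ} (hs : |s| = 1) (hl' : l' < 0)
    (hleft : ∀ ζ : ℂ, ζ.re ≤ l' → s * (G ζ - ζ).im ≤ -1)
    (hright : ∀ ζ : ℂ, ζ.re = 0 → 1 ≤ s * (G ζ - ζ).im)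
    (hne : ∀ ζ : ℂ, ζ.re ≤ 0 → diskCover ζ = a → G ζ ≠ ζ) : False := by
  obtain ⟨c, hc⟩ := (hG.mono Icc_subset_Iic_self).exists_forall_le_re hl'.le
  set l := min (l' - 1) (c - 1)
  have hll' : l < l' := (min_le_left _ _).trans_lt (by linarith)
  have hl : l ≤ 0 := (hll'.trans hl').le
  obtain ⟨k, ⟨H, hH, hHG⟩, hfixk⟩ := ((h.eventually_exists_isCoverLift
    (hG.mono Icc_subset_Iic_self) hl (by norm_num : (0 : ℝ) < 1 / 2)).and hfix).exists
  have hHne (ζ : ℂ) (hζ : ζ.re ∈ Icc l 0) : H ζ ≠ ζ := fun hfixζ => by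
    have hcover : conjRotation (g k) (θ k) (diskCover ζ) = diskCover ζ := by
      rw [← hH.diskCover_eq hζ, hfixζ]
    have hζa := hfixk _ hcover
    refine hne ζ hζ.2 hζa (((hHG ζ hζ).2 ?_).symm.trans hfixζ)
    rw [hcover, hζa, ha]
  obtain ⟨m, hm, hHm⟩ := hH.exists_pos_forall_le_norm_sub hl hHne
  have him (ζ : ℂ) (hζ : ζ.re ∈ Icc l 0) : |s * (H ζ - ζ).im - s * (G ζ - ζ).im| < 1 / 2 := by
    rw [← mul_sub, ← sub_im, sub_sub_sub_cancel_right, abs_mul, hs, one_mul]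
    exact (abs_im_le_norm _).trans_lt (hHG ζ hζ).1
  refine IsStripTwist.false_of_isCoverLift_conjRotation (m := min m (1 / 2)) (l' := l') (s := s)
    ⟨hll', hl', by positivity, hH.continuousOn, fun ζ hζ => (min_le_left _ _).trans (hHm ζ hζ),
      fun ζ hζ => ?_, fun ζ hζ => ?_, fun ζ hζ => ?_⟩ (h.preservesCircle k) hH hz₀ (hgz₀ k)
  · linarith [(abs_lt.1 (him ζ ⟨hζ.1, hζ.2.trans hl'.le⟩)).2, hleft ζ hζ.2]
  · linarith [(abs_lt.1 (him ζ (by simpa [hζ] using hl))).1, hright ζ hζ]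
  · have hre := (abs_re_le_norm _).trans_lt (hHG ζ ⟨hll'.le.trans hζ.1, hζ.2⟩).1
    rw [sub_re] at hre
    linarith [(abs_lt.1 hre).1, hc ζ hζ, min_le_right m (1 / 2), min_le_right (l' - 1) (c - 1)]

end IsRotationLimit

/-! ### Fixed points with a fixed direction -/

theorem conjRotation_apply_of_apply_eq_zero {g : Disk ≃ₜ Disk} {a : Disk} (ha : (g a : ℂ) = 0)
    (θ : ℝ) : conjRotation g θ a = a := by
  rw [conjRotation_apply, Homeomorph.symm_apply_eq]
  exact Subtype.ext (by rw [coe_diskRotation, ha, mul_zero])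

theorem eq_of_conjRotation_apply_eq {g : Disk ≃ₜ Disk} {a : Disk} (ha : (g a : ℂ) = 0) {θ : ℝ}
    (hθ : exp (θ * I) ≠ 1) {x : Disk} (hx : conjRotation g θ x = x) : x = a := by
  rw [conjRotation_apply, Homeomorph.symm_apply_eq, Subtype.ext_iff, coe_diskRotation] at hx
  refine g.injective (Subtype.ext ?_)
  rw [ha]
  by_contra h
  exact hθ (mul_right_cancel₀ h (hx.trans (one_mul _).symm))

namespace IsRotationLimit

variable {g : ℕ → Disk ≃ₜ Disk} {θ : ℕ → ℝ} {θ' : ℝ} {ψ : C(Disk, Disk)} {a : Disk}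

theorem apply_eq_of_forall_apply_eq_zero (h : IsRotationLimit g θ θ' ψ)
    (ha : ∀ k, (g k a : ℂ) = 0) : ψ a = a := by
  have hlim := h.tendsto_apply a
  simp only [conjRotation_apply_of_apply_eq_zero (ha _)] at hlim
  exact tendsto_nhds_unique hlim tendsto_const_nhds

theorem eventually_forall_eq_of_apply_eq (h : IsRotationLimit g θ θ' ψ)
    (hθ' : exp (θ' * I) ≠ 1) (ha : ∀ k, (g k a : ℂ) = 0) :
    ∀ᶠ k in atTop, ∀ x, conjRotation (g k) (θ k) x = x → x = a := by
  have hcont : Continuous fun t : ℝ => exp (t * I) := by fun_prop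
  filter_upwards [((hcont.tendsto θ').comp h.tendsto_angle).eventually_ne hθ'] with k hk x
  exact eq_of_conjRotation_apply_eq (ha k) hk

theorem exists_sign_mul_im_ge (h : IsRotationLimit g θ θ' ψ) (hθ' : exp (θ' * I) ≠ 1) {G : ℂ → ℂ}
    (hG : IsCoverLift ψ G (Iic 0)) :
    ∃ s : ℤ, |s| = 1 ∧ ∃ δ > 0, ∀ ζ : ℂ, ζ.re = 0 → δ ≤ s * (G ζ - ζ).im := by
  have hb := hG.isCircleLift self_mem_Iic fun _ => h.norm_apply_eq_one
  have hper : (fun t : ℝ => (G (t * I)).im - t).Periodic (2 * π) := fun t => by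
    have := hG.add_int_mul (t * I) 1 (by simp)
    have him : (G ((t + 2 * π : ℝ) * I)).im = (G (t * I)).im + 2 * π := by
      simpa [add_mul] using congrArg im this
    simp only [him, add_sub_add_right_eq_sub]
  have hne (t : ℝ) : (G (t * I)).im - t ≠ 0 := fun ht => by
    refine h.apply_ne_of_norm_eq_one hθ' (norm_diskCover_mul_I t) ?_
    rw [← hb.diskCover_eq, sub_eq_zero.1 ht]
  obtain ⟨s, hs, δ, hδ, hsδ⟩ := exists_sign_mul_ge_of_periodic
    (hb.continuous.sub continuous_id) hper Real.two_pi_pos.ne' hne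
  refine ⟨s, hs, δ, hδ, fun ζ hζ => ?_⟩
  obtain ⟨t, rfl⟩ : ∃ t : ℝ, ζ = t * I := ⟨ζ.im, Complex.ext (by simp [hζ]) (by simp)⟩
  simpa using hsδ t

end IsRotationLimit

namespace IsCoverLift

variable {f : Disk → Disk} {G : ℂ → ℂ}

theorem sub_int_mul {K : Set ℝ} (hG : IsCoverLift f G K) (n : ℤ) :
    IsCoverLift f (fun ζ => G ζ - n * (2 * π * I)) K where
  continuousOn := hG.continuousOn.sub continuousOn_const
  exp_eq ζ hζ := by rw [exp_sub, exp_int_mul_two_pi_mul_I, div_one, hG.exp_eq ζ hζ]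
  add_int_mul ζ m hζ := by
    rw [hG.add_int_mul ζ m hζ]
    ring

theorem mul_le_mul_im_iterate_sub (hG : IsCoverLift f G (Iic 0))
    (hf : ∀ x : Disk, ‖(x : ℂ)‖ = 1 → ‖(f x : ℂ)‖ = 1) {s δ : ℝ}
    (hδ : ∀ ζ : ℂ, ζ.re = 0 → δ ≤ s * (G ζ - ζ).im) (n : ℕ) {ζ : ℂ} (hζ : ζ.re = 0) :
    n * δ ≤ s * (G^[n] ζ - ζ).im := by
  induction n generalizing ζ with
  | zero => simp
  | succ n ih =>
    have hsum : G^[n + 1] ζ - ζ = (G^[n] (G ζ) - G ζ) + (G ζ - ζ) := by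
      rw [Function.iterate_succ_apply, sub_add_sub_cancel]
    rw [hsum, add_im, mul_add, Nat.cast_succ, add_one_mul]
    exact add_le_add (ih (hG.re_eq_zero self_mem_Iic hf hζ)) (hδ ζ hζ)

theorem exists_int_forall_iterate_eq (hG : IsCoverLift f G (Iic 0)) {ζ : ℂ} (hζ : ζ.re ≤ 0)
    (hfix : f (diskCover ζ) = diskCover ζ) :
    ∃ m : ℤ, ∀ n : ℕ, G^[n] ζ = ζ + (n * m : ℤ) * (2 * π * I) := by
  obtain ⟨m, hm⟩ : ∃ m : ℤ, G ζ = ζ + m * (2 * π * I) := by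
    rw [← exp_eq_exp_iff_exists_int, hG.exp_eq ζ hζ, hfix, coe_diskCover hζ]
  refine ⟨m, fun n => ?_⟩
  induction n with
  | zero => simp
  | succ n ih =>
    rw [Function.iterate_succ_apply', ih, hG.add_int_mul ζ _ hζ, hm]
    push_cast
    ring

end IsCoverLift

namespace IsRotationLimit

variable {g : ℕ → Disk ≃ₜ Disk} {θ : ℕ → ℝ} {θ' : ℝ} {ψ : C(Disk, Disk)} {z₀ a : Disk}

-- Near the boundary `G^[n]` moves points by at least one full turn, near the center by at most
-- half a turn; subtracting one full turn yields a twist. Since `n ≥ 2`, one full turn is not the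
-- total rotation of the fixed point `a`, so the twist has no fixed point.
theorem false_of_forall_iterate_im_sub_lt_pi (h : IsRotationLimit g θ θ' ψ)
    (hθ' : ∀ n : ℕ, n ≠ 0 → exp ((n * θ' : ℝ) * I) ≠ 1) (hz₀ : (z₀ : ℂ) = 0)
    (hgz₀ : ∀ k, (g k z₀ : ℂ) ≠ 0) (ha : ∀ k, (g k a : ℂ) = 0) {G : ℂ → ℂ}
    (hG : IsCoverLift ψ G (Iic 0)) (hGn : ∀ n, IsCoverLift ψ^[n] G^[n] (Iic 0))
    (hcenter : ∀ n, ∃ ℓ < 0, ∀ ζ : ℂ, ζ.re ≤ ℓ → |(G^[n] ζ - ζ).im| < π) : False := by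
  obtain ⟨s, hs, δ, hδ, hsδ⟩ := h.exists_sign_mul_im_ge (by simpa using hθ' 1 one_ne_zero) hG
  obtain ⟨n, hnδ, hn⟩ : ∃ n : ℕ, 2 * π + 1 ≤ n * δ ∧ 2 ≤ n := by
    obtain ⟨N, hN⟩ := exists_nat_ge ((2 * π + 1) / δ)
    refine ⟨N + 2, ?_, Nat.le_add_left 2 N⟩
    rw [div_le_iff₀ hδ] at hN
    push_cast
    linarith
  have hsR : |(s : ℝ)| = 1 := by exact_mod_cast hs
  have him (ζ : ℂ) : s * (G^[n] ζ - s * (2 * π * I) - ζ).im = s * (G^[n] ζ - ζ).im - 2 * π := by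
    have hss : (s : ℝ) * s = 1 := by rw [← abs_mul_abs_self, hsR, one_mul]
    simp
    linear_combination -2 * π * hss
  obtain ⟨ℓ, hℓ, hsmall⟩ := hcenter n
  refine (h.iterateMap n).false_of_isCoverLift hz₀ hgz₀
    ((h.iterateMap n).apply_eq_of_forall_apply_eq_zero ha)
    ((h.iterateMap n).eventually_forall_eq_of_apply_eq (hθ' n (by lia)) ha)
    ((hGn n).sub_int_mul s) hsR hℓ (fun ζ hζ => ?_) (fun ζ hζ => ?_) fun ζ hζ hζa hfix => ?_
  · have hle := le_abs_self (s * (G^[n] ζ - ζ).im)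
    rw [abs_mul, hsR, one_mul] at hle
    linarith [him ζ, hsmall ζ hζ, Real.pi_gt_three]
  · linarith [him ζ, hG.mul_le_mul_im_iterate_sub (fun _ => h.norm_apply_eq_one) hsδ n hζ]
  · obtain ⟨m, hm⟩ := hG.exists_int_forall_iterate_eq hζ
      (by rw [hζa, h.apply_eq_of_forall_apply_eq_zero ha])
    have hnm : (n * m : ℤ) = s := by
      have : ((n * m : ℤ) : ℂ) * (2 * π * I) = s * (2 * π * I) := by
        linear_combination hfix - hm n
      exact_mod_cast mul_right_cancel₀ two_pi_I_ne_zero this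
    have hdvd : (n : ℤ) ∣ 1 := hs ▸ (dvd_abs _ _).2 ⟨m, hnm.symm⟩
    have := Int.le_of_dvd one_pos hdvd
    lia

theorem false_of_hasFDerivAt_of_apply_eq (h : IsRotationLimit g θ θ' ψ)
    (hθ' : ∀ n : ℕ, n ≠ 0 → exp ((n * θ' : ℝ) * I) ≠ 1) (hz₀ : (z₀ : ℂ) = 0)
    (hgz₀ : ∀ k, (g k z₀ : ℂ) ≠ 0) (ha : ∀ k, (g k a : ℂ) = 0) {F : ℂ → ℂ} {A : ℂ →L[ℝ] ℂ} {v : ℂ}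
    (hψ : ∀ x : Disk, (ψ x : ℂ) = 0 ↔ (x : ℂ) = 0)
    (hF : Function.Semiconj ((↑) : Disk → ℂ) ψ F) (hF' : HasFDerivAt F A 0) (hA : A.det = 1)
    (hv : v ≠ 0) (hAv : A v = v) : False := by
  have hF₀ : F 0 = 0 := by rw [← hz₀, ← hF, (hψ z₀).2 hz₀, hz₀]
  obtain ⟨G, hG⟩ := exists_isDirectedLift hF hF' hF₀
    (fun _ => apply_div_mem_slitPlane hA hv hAv) (fun x => (hψ x).1) hv hAv
  refine h.false_of_forall_iterate_im_sub_lt_pi hθ' hz₀ hgz₀ ha hG.toIsCoverLift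
    (fun n => (hG.iterate n).toIsCoverLift) fun n => ?_
  have hdet : (A ^ n).det = 1 := by
    rw [ContinuousLinearMap.det] at hA ⊢
    simp [hA]
  have hvn : (A ^ n) v = v := by
    rw [FunLike.coe_pow_eq_iterate, Function.iterate_fixed hAv]
  exact IsDirectedLift.exists_abs_im_sub_lt_pi (f := _root_.iterateMap ψ n) (hG.iterate n)
    (hF.iterate_right n) (hF'.iterate hF₀ n) (Function.iterate_fixed hF₀ n)
    fun _ => apply_div_mem_slitPlane hdet hv hvn

end IsRotationLimit

/-! ### Nondegenerate fixed points -/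

theorem not_periodic_of_exp_add_eq_neg {μ : ℝ → ℂ} (hμ : Continuous μ) {c : ℝ}
    (h : ∀ t, exp (μ (t + c)) = -exp (μ t)) : ¬ μ.Periodic (c + c) := by
  intro hper
  obtain ⟨n, hn⟩ := exists_int_eqOn_of_exp_eqOn (L := fun t => μ (t + c))
    (V := fun t => μ t + π * I) isPreconnected_univ (by fun_prop) (by fun_prop)
    fun t _ => by rw [h, exp_add, exp_pi_mul_I, mul_neg_one]
  have h₁ := hn 0 (mem_univ 0)
  have h₂ := hn (0 + c) (mem_univ (0 + c))
  rw [add_assoc, hper] at h₂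
  have hodd : ((2 * n + 1 : ℤ) : ℂ) * (2 * π * I) = 0 := by
    push_cast
    linear_combination -h₁ - h₂
  rw [mul_eq_zero, or_iff_left two_pi_I_ne_zero, Int.cast_eq_zero] at hodd
  lia

-- Otherwise `f`, and with it the odd map `A`, would have a continuous logarithm on the circle.
theorem exists_mem_closedBall_eq_zero_of_norm_sub_lt {f A : ℂ → ℂ} {c : ℂ} {r : ℝ} (hr : 0 ≤ r)
    (hf : ContinuousOn f (closedBall c r)) (hA : ContinuousOn A (sphere 0 r)) (hodd : A.Odd)
    (h : ∀ z ∈ sphere 0 r, ‖f (c + z) - A z‖ < ‖A z‖) : ∃ z ∈ closedBall c r, f z = 0 := by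
  by_contra! hne
  obtain ⟨L, hLc, hL⟩ := exists_continuousOn_exp_eq (convex_closedBall c r) hf hne
  set w : ℝ → ℂ := circleMap 0 r
  have hw (t : ℝ) : w t ∈ sphere 0 r := circleMap_mem_sphere 0 hr t
  have hcw (t : ℝ) : c + w t ∈ closedBall c r := by
    simpa using sphere_subset_closedBall (hw t)
  have hwc : Continuous w := continuous_circleMap 0 r
  have hA₀ (t : ℝ) : A (w t) ≠ 0 := norm_pos_iff.1 ((norm_nonneg _).trans_lt (h _ (hw t)))
  have hslit (t : ℝ) : f (c + w t) / A (w t) ∈ slitPlane := by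
    refine Or.inl (re_pos_of_norm_sub_one_lt ?_)
    rw [div_sub_one (hA₀ t), norm_div, div_lt_one (norm_pos_iff.2 (hA₀ t))]
    exact h _ (hw t)
  set μ : ℝ → ℂ := fun t => L (c + w t) - log (f (c + w t) / A (w t)) with hμ
  have hμc : Continuous μ :=
    (hLc.comp_continuous (by fun_prop) hcw).sub
      (((hf.comp_continuous (by fun_prop) hcw).div (hA.comp_continuous hwc hw) hA₀).clog hslit)
  have hexp (t : ℝ) : exp (μ t) = A (w t) := by
    rw [hμ, exp_sub, hL _ (hcw t), exp_log (slitPlane_ne_zero (hslit t)),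
      div_div_cancel₀ (hne _ (hcw t))]
  have hpi (t : ℝ) : w (t + π) = -w t := by
    simp [w, circleMap, add_mul, exp_add]
  refine not_periodic_of_exp_add_eq_neg hμc (c := π) (fun t => ?_) fun t => ?_
  · rw [hexp, hexp, hpi, hodd]
  · rw [hμ, ← add_assoc]
    simp only [hpi, neg_neg]

theorem disk_mem_nhds {z : ℂ} (hz : ‖z‖ < 1) : Disk ∈ 𝓝 z :=
  mem_of_superset (isOpen_ball.mem_nhds (mem_ball_zero_iff.2 hz)) ball_subset_closedBall

theorem exists_pos_mul_norm_le_norm_sub {A : ℂ →L[ℝ] ℂ} (hA : ∀ v, A v = v → v = 0) :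
    ∃ c > 0, ∀ v, c * ‖v‖ ≤ ‖A v - v‖ := by
  obtain ⟨K, hK, hanti⟩ := LinearMap.exists_antilipschitzWith
    ((A : ℂ →ₗ[ℝ] ℂ) - LinearMap.id) (LinearMap.ker_eq_bot'.2 fun v hv => hA v (sub_eq_zero.1 hv))
  refine ⟨(K : ℝ)⁻¹, by positivity, fun v => ?_⟩
  rw [inv_mul_le_iff₀ (by positivity)]
  simpa using hanti.le_mul_dist v 0

theorem eventually_exists_apply_eq_self_of_hasFDerivAt {ι : Type*} {p : Filter ι}
    {f : ι → C(Disk, Disk)} {ψ : C(Disk, Disk)} (h : Tendsto f p (𝓝 ψ)) {F : ℂ → ℂ}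
    {A : ℂ →L[ℝ] ℂ} {z : Disk} (hF : Function.Semiconj ((↑) : Disk → ℂ) ψ F)
    (hF' : HasFDerivAt F A z) (hA : ∀ v, A v = v → v = 0) (hz : ‖(z : ℂ)‖ < 1) (hfix : ψ z = z)
    {ε : ℝ} (hε : 0 < ε) : ∀ᶠ k in p, ∃ x, f k x = x ∧ dist x z < ε := by
  obtain ⟨c, hc, hcA⟩ := exists_pos_mul_norm_le_norm_sub hA
  obtain ⟨r, hr, hball⟩ := nhds_basis_closedBall.mem_iff.1 (inter_mem (inter_mem
    (disk_mem_nhds hz) (ball_mem_nhds (z : ℂ) hε)) (hF'.isLittleO.def (c := c / 4) (by positivity)))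
  filter_upwards [eventually_forall_norm_coe_sub_lt h (ε := c / 4 * r) (by positivity)] with k hk
  obtain ⟨Φ, hΦ⟩ := ContinuousMap.exists_restrict_eq isClosed_closedBall
    ((⟨Subtype.val, continuous_subtype_val⟩ : C(Disk, ℂ)).comp (f k))
  have hΦ' (x : Disk) : Φ x = f k x := DFunLike.congr_fun hΦ x
  have hclose (v : ℂ) (hv : v ∈ sphere 0 r) :
      ‖Φ (z + v) - (z + v) - (A v - v)‖ < ‖A v - v‖ := by
    rw [mem_sphere_zero_iff_norm] at hv
    obtain ⟨⟨hw, -⟩, hwF⟩ := @hball (z + v) (by simp [hv])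
    rw [mem_ofPred, add_sub_cancel_left, hv, ← hF, hfix, ← hF ⟨z + v, hw⟩] at hwF
    have hkw := hk ⟨z + v, hw⟩
    rw [← hΦ'] at hkw
    calc ‖Φ (z + v) - (z + v) - (A v - v)‖
      _ = ‖(Φ (z + v) - ψ ⟨z + v, hw⟩) + (ψ ⟨z + v, hw⟩ - z - A v)‖ := by ring_nf
      _ ≤ ‖Φ (z + v) - ψ ⟨z + v, hw⟩‖ + ‖ψ ⟨z + v, hw⟩ - z - A v‖ := norm_add_le _ _
      _ < c * r := by nlinarith [mul_pos hc hr]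
      _ ≤ ‖A v - v‖ := hv ▸ hcA v
  obtain ⟨x, hx, hx₀⟩ := exists_mem_closedBall_eq_zero_of_norm_sub_lt (f := fun w => Φ w - w)
    hr.le (by fun_prop) (by fun_prop) (fun v => by simp only [map_neg]; ring) hclose
  obtain ⟨⟨hxD, hxε⟩, -⟩ := hball hx
  lift x to Disk using hxD
  exact ⟨x, Subtype.ext (by rw [← hΦ', sub_eq_zero.1 hx₀]), hxε⟩

theorem IsRotationLimit.eq_of_hasFDerivAt_of_apply_eq {g : ℕ → Disk ≃ₜ Disk} {θ : ℕ → ℝ} {θ' : ℝ}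
    {ψ : C(Disk, Disk)} {z a : Disk} (h : IsRotationLimit g θ θ' ψ) (hθ' : exp (θ' * I) ≠ 1)
    (ha : ∀ k, (g k a : ℂ) = 0) {F : ℂ → ℂ} {A : ℂ →L[ℝ] ℂ}
    (hF : Function.Semiconj ((↑) : Disk → ℂ) ψ F) (hF' : HasFDerivAt F A z)
    (hA : ∀ v, A v = v → v = 0) (hz : ‖(z : ℂ)‖ < 1) (hfix : ψ z = z) : z = a := by
  by_contra hza
  obtain ⟨k, ⟨x, hx, hdist⟩, hk⟩ := ((eventually_exists_apply_eq_self_of_hasFDerivAt h.tendsto hF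
    hF' hA hz hfix (dist_pos.2 (Ne.symm hza))).and
      (h.eventually_forall_eq_of_apply_eq hθ' ha)).exists
  rw [hk x hx] at hdist
  exact lt_irrefl _ hdist

/-! ### Smooth diffeomorphisms of the disk -/

namespace SmoothDiskDiffeo

variable (φ : SmoothDiskDiffeo)

/-- The inverse diffeomorphism. -/
def symm : SmoothDiskDiffeo where
  toFun := φ.invFun
  invFun := φ.toFun
  mapsTo := φ.mapsTo_inv
  mapsTo_inv := φ.mapsTo
  left_inv := φ.right_inv
  right_inv := φ.left_inv
  smooth := φ.smooth_inv
  smooth_inv := φ.smooth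

/-- The homeomorphism of `Disk` underlying a smooth diffeomorphism. -/
def toHomeomorph : Disk ≃ₜ Disk where
  toFun x := ⟨φ.toFun x, φ.mapsTo x.2⟩
  invFun x := ⟨φ.invFun x, φ.mapsTo_inv x.2⟩
  left_inv x := Subtype.ext (φ.left_inv x x.2)
  right_inv x := Subtype.ext (φ.right_inv x x.2)
  continuous_toFun := φ.smooth.continuousOn.mapsToRestrict φ.mapsTo
  continuous_invFun := φ.smooth_inv.continuousOn.mapsToRestrict φ.mapsTo_inv

theorem semiconj_toHomeomorph :
    Function.Semiconj ((↑) : Disk → ℂ) φ.toHomeomorph φ.toFun := fun _ => rfl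

variable {φ} {z : ℂ}

theorem hasStrictFDerivAt (hz : ‖z‖ < 1) :
    HasStrictFDerivAt φ.toFun (fderiv ℝ φ.toFun z) z :=
  (φ.smooth.contDiffAt (disk_mem_nhds hz)).hasStrictFDerivAt (by simp)

theorem fderivWithin_comp_fderiv (hz : ‖z‖ < 1) :
    (fderivWithin ℝ φ.invFun Disk (φ.toFun z)).comp (fderiv ℝ φ.toFun z) = .id ℝ ℂ := by
  have hzD := disk_mem_nhds hz
  have hinv : HasFDerivWithinAt φ.invFun (fderivWithin ℝ φ.invFun Disk (φ.toFun z)) Disk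
      (φ.toFun z) :=
    ((φ.smooth_inv _ (φ.mapsTo (mem_of_mem_nhds hzD))).differentiableWithinAt
      (by simp)).hasFDerivWithinAt
  refine ((hinv.comp z (hasStrictFDerivAt hz).hasFDerivAt.hasFDerivWithinAt
    φ.mapsTo).hasFDerivAt hzD).unique ((hasFDerivAt_id z).congr_of_eventuallyEq ?_)
  filter_upwards [hzD] with w hw using φ.left_inv w hw

theorem norm_toFun_lt_one (hz : ‖z‖ < 1) : ‖φ.toFun z‖ < 1 := by
  have hinj : Function.Injective (fderiv ℝ φ.toFun z : ℂ →ₗ[ℝ] ℂ) :=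
    Function.LeftInverse.injective (DFunLike.congr_fun (fderivWithin_comp_fderiv hz))
  have hmem : Disk ∈ 𝓝 (φ.toFun z) := by
    rw [← (hasStrictFDerivAt hz).map_nhds_eq_of_surj
      (LinearMap.range_eq_top.2 (LinearMap.injective_iff_surjective.1 hinj)), mem_map]
    exact mem_of_superset (disk_mem_nhds hz) φ.mapsTo
  rw [← mem_interior_iff_mem_nhds, Disk, interior_closedBall _ one_ne_zero] at hmem
  exact mem_ball_zero_iff.1 hmem

variable (φ) in
theorem preservesCircle_toHomeomorph : PreservesCircle φ.toHomeomorph := fun x => by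
  have hlt : ‖(φ.toHomeomorph x : ℂ)‖ < 1 ↔ ‖(x : ℂ)‖ < 1 := by
    refine ⟨fun h => ?_, norm_toFun_lt_one⟩
    have := φ.symm.norm_toFun_lt_one h
    rwa [show φ.symm.toFun (φ.toHomeomorph x) = x from φ.left_inv x x.2] at this
  have := not_congr hlt
  rwa [not_lt, not_lt, (norm_coe_le_one _).ge_iff_eq, (norm_coe_le_one _).ge_iff_eq] at this

theorem exists_hasFDerivAt_iterate (hφ : AreaPreserving φ) (n : ℕ) (hz : ‖z‖ < 1) :
    ∃ A : ℂ →L[ℝ] ℂ, HasFDerivAt φ.toFun^[n] A z ∧ A.det = 1 := by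
  suffices ‖φ.toFun^[n] z‖ < 1 ∧ ∃ A : ℂ →L[ℝ] ℂ, HasFDerivAt φ.toFun^[n] A z ∧ A.det = 1 from
    this.2
  induction n with
  | zero => exact ⟨hz, .id ℝ ℂ, hasFDerivAt_id z, LinearMap.det_id⟩
  | succ n ih =>
    obtain ⟨hn, A, hA, hdet⟩ := ih
    rw [Function.iterate_succ']
    refine ⟨norm_toFun_lt_one hn, _, (hasStrictFDerivAt hn).hasFDerivAt.comp z hA, ?_⟩
    have hφn := hφ _ (mem_of_mem_nhds (disk_mem_nhds hn))
    rw [fderivWithin_of_mem_nhds (disk_mem_nhds hn)] at hφn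
    exact (LinearMap.det_comp _ _).trans ((congrArg₂ (· * ·) hφn hdet).trans (one_mul 1))

end SmoothDiskDiffeo

/-! ### Moving an interior point to the center -/

/-- The Möbius automorphism of the closed unit disk that maps `p` to `0`. -/
noncomputable def mobius (p z : ℂ) : ℂ := (z - p) / (1 - conj p * z)

section Mobius

variable {p z : ℂ}

theorem one_sub_conj_mul_ne_zero (hp : ‖p‖ < 1) (hz : ‖z‖ ≤ 1) : 1 - conj p * z ≠ 0 := by
  refine sub_ne_zero.2 fun h => ?_
  have hnorm := congrArg norm h
  rw [norm_one, norm_mul, norm_conj] at hnorm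
  exact (mul_lt_one_of_nonneg_of_lt_one_left (norm_nonneg p) hp hz).ne' hnorm

theorem norm_one_sub_conj_mul_sq_sub (p z : ℂ) :
    ‖1 - conj p * z‖ ^ 2 - ‖z - p‖ ^ 2 = (1 - ‖p‖ ^ 2) * (1 - ‖z‖ ^ 2) := by
  simp only [← normSq_eq_norm_sq, normSq_apply, sub_re, sub_im, mul_re, mul_im, conj_re, conj_im,
    one_re, one_im]
  ring

theorem norm_mobius_le_one (hp : ‖p‖ < 1) (hz : ‖z‖ ≤ 1) : ‖mobius p z‖ ≤ 1 := by
  rw [mobius, norm_div, div_le_one (norm_pos_iff.2 (one_sub_conj_mul_ne_zero hp hz)),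
    ← sq_le_sq₀ (norm_nonneg _) (norm_nonneg _), ← sub_nonneg, norm_one_sub_conj_mul_sq_sub]
  exact mul_nonneg (sub_nonneg.2 (pow_le_one₀ (norm_nonneg p) hp.le))
    (sub_nonneg.2 (pow_le_one₀ (norm_nonneg z) hz))

theorem norm_mobius_eq_one_iff (hp : ‖p‖ < 1) (hz : ‖z‖ ≤ 1) : ‖mobius p z‖ = 1 ↔ ‖z‖ = 1 := by
  have hp₂ : 1 - ‖p‖ ^ 2 ≠ 0 := (sub_pos.2 (pow_lt_one₀ (norm_nonneg p) hp two_ne_zero)).ne'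
  rw [mobius, norm_div, div_eq_one_iff_eq (norm_ne_zero_iff.2 (one_sub_conj_mul_ne_zero hp hz)),
    eq_comm, ← sq_eq_sq₀ (norm_nonneg _) (norm_nonneg _), ← sub_eq_zero,
    norm_one_sub_conj_mul_sq_sub, mul_eq_zero, or_iff_right hp₂, sub_eq_zero, eq_comm,
    pow_eq_one_iff_of_nonneg (norm_nonneg z) two_ne_zero]

theorem continuousOn_mobius (hp : ‖p‖ < 1) : ContinuousOn (mobius p) {z | ‖z‖ ≤ 1} :=
  ContinuousOn.div (by fun_prop) (by fun_prop) fun _ => one_sub_conj_mul_ne_zero hp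

theorem mobius_neg_mobius (hp : ‖p‖ < 1) (hz : ‖z‖ ≤ 1) : mobius (-p) (mobius p z) = z := by
  have hpz := one_sub_conj_mul_ne_zero hp hz
  have hpp := one_sub_conj_mul_ne_zero hp hp.le
  have hnum : mobius p z - -p = z * (1 - conj p * p) / (1 - conj p * z) := by
    rw [mobius, eq_div_iff hpz, sub_mul, div_mul_cancel₀ _ hpz]
    ring
  have hden : 1 - conj (-p) * mobius p z = (1 - conj p * p) / (1 - conj p * z) := by
    rw [mobius, eq_div_iff hpz, map_neg, sub_mul, mul_assoc, div_mul_cancel₀ _ hpz]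
    ring
  rw [mobius, hnum, hden, div_div_div_cancel_right₀ hpz, mul_div_cancel_right₀ _ hpp]

theorem mobius_self (p : ℂ) : mobius p p = 0 := by
  rw [mobius, sub_self, zero_div]

theorem mobius_neg_zero (p : ℂ) : mobius (-p) 0 = p := by
  simp [mobius]

theorem hasDerivAt_mobius (hz : 1 - conj p * z ≠ 0) :
    HasDerivAt (mobius p) ((1 - conj p * p) / (1 - conj p * z) ^ 2) z := by
  refine (((hasDerivAt_id z).sub_const p).div
    (((hasDerivAt_id z).const_mul (conj p)).const_sub 1) hz).congr_deriv ?_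
  simp only [id]
  ring

-- The derivatives of the two Möbius maps are the real scalars `(1 - ‖p‖²)⁻¹` and `1 - ‖p‖²`.
theorem hasFDerivAt_mobius_comp {F : ℂ → ℂ} {A : ℂ →L[ℝ] ℂ} (hp : ‖p‖ < 1) (hF : F p = p)
    (hF' : HasFDerivAt F A p) : HasFDerivAt (mobius p ∘ F ∘ mobius (-p)) A 0 := by
  set c : ℝ := 1 - normSq p with hc
  have hpc : 1 - conj p * p = c := by
    rw [hc, ← normSq_eq_conj_mul_self, ofReal_sub, ofReal_one]
  have hc₀ : (c : ℂ) ≠ 0 := hpc ▸ one_sub_conj_mul_ne_zero hp hp.le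
  have houter : HasDerivAt (mobius p) (c : ℂ)⁻¹ (F (mobius (-p) 0)) := by
    rw [mobius_neg_zero, hF]
    convert hasDerivAt_mobius (hpc ▸ hc₀) using 1
    rw [hpc]
    field_simp
  have hinner : HasDerivAt (mobius (-p)) c 0 := by
    simpa [hpc] using hasDerivAt_mobius (p := -p) (z := 0) (by simp)
  rw [← mobius_neg_zero p] at hF'
  refine (houter.complexToReal_fderiv.comp 0
    (hF'.comp 0 hinner.complexToReal_fderiv)).congr_fderiv (ContinuousLinearMap.ext fun v => ?_)
  have hA : A (c * v) = c * A v := by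
    rw [← real_smul, map_smul, real_smul]
  simp [hA, hc₀]

/-- `mobius p` as a homeomorphism of the closed disk. -/
noncomputable def mobiusHomeomorph (p : ℂ) (hp : ‖p‖ < 1) : Disk ≃ₜ Disk where
  toFun x := ⟨mobius p x, mem_closedBall_zero_iff.2 (norm_mobius_le_one hp (norm_coe_le_one x))⟩
  invFun x := ⟨mobius (-p) x,
    mem_closedBall_zero_iff.2 (norm_mobius_le_one (by rwa [norm_neg]) (norm_coe_le_one x))⟩
  left_inv x := Subtype.ext (mobius_neg_mobius hp (norm_coe_le_one x))
  right_inv x := Subtype.ext (by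
    simpa using mobius_neg_mobius (p := -p) (by rwa [norm_neg]) (norm_coe_le_one x))
  continuous_toFun := (continuousOn_mobius hp).comp_continuous continuous_subtype_val
    norm_coe_le_one |>.subtype_mk _
  continuous_invFun := (continuousOn_mobius (by rwa [norm_neg])).comp_continuous
    continuous_subtype_val norm_coe_le_one |>.subtype_mk _

theorem preservesCircle_mobiusHomeomorph (hp : ‖p‖ < 1) :
    PreservesCircle (mobiusHomeomorph p hp) :=
  fun x => norm_mobius_eq_one_iff hp (norm_coe_le_one x)

end Mobius

namespace IsRotationLimit

variable {g : ℕ → Disk ≃ₜ Disk} {θ : ℕ → ℝ} {θ' : ℝ} {ψ : C(Disk, Disk)} {z a : Disk}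

theorem conj_homeomorph {N : Disk ≃ₜ Disk} (h : IsRotationLimit g θ θ' ψ) (hN : PreservesCircle N) :
    IsRotationLimit (fun k => N.symm.trans (g k)) θ θ'
      ((N : C(Disk, Disk)).comp (ψ.comp (N.symm : C(Disk, Disk)))) where
  preservesCircle k x := (h.preservesCircle k _).trans (hN.symm x)
  tendsto_angle := h.tendsto_angle
  tendsto := tendsto_const_nhds.compCM (h.tendsto.compCM tendsto_const_nhds)

-- After conjugation by a Möbius map the fixed point becomes the center of the disk.
theorem eq_of_apply_eq_of_fixed_vector (h : IsRotationLimit g θ θ' ψ)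
    (hθ' : ∀ n : ℕ, n ≠ 0 → exp ((n * θ' : ℝ) * I) ≠ 1) (ha : ∀ k, (g k a : ℂ) = 0)
    (hψ : Function.Injective ψ) {F : ℂ → ℂ} {A : ℂ →L[ℝ] ℂ} {v : ℂ}
    (hF : Function.Semiconj ((↑) : Disk → ℂ) ψ F) (hF' : HasFDerivAt F A z) (hA : A.det = 1)
    (hz : ‖(z : ℂ)‖ < 1) (hfix : ψ z = z) (hv : v ≠ 0) (hAv : A v = v) : z = a := by
  by_contra hza
  set N := mobiusHomeomorph z hz
  have hN : PreservesCircle N := preservesCircle_mobiusHomeomorph hz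
  have hNz : (N z : ℂ) = 0 := mobius_self z
  have hN₀ (x : Disk) : (N x : ℂ) = 0 ↔ x = z := by
    rw [← hNz, Subtype.coe_inj, N.injective.eq_iff]
  have hψz (x : Disk) : ψ x = z ↔ x = z := by
    simpa only [hfix] using hψ.eq_iff (a := x) (b := z)
  refine (h.conj_homeomorph hN).false_of_hasFDerivAt_of_apply_eq hθ' hNz (a := N a)
    (fun k hk => hza ?_) (fun k => ?_) (fun x => ?_) (F := mobius z ∘ F ∘ mobius (-z))
    (fun x => congrArg (mobius z) (hF _))
    (hasFDerivAt_mobius_comp hz ((hF z).symm.trans (congrArg _ hfix)) hF') hA hv hAv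
  · rw [Homeomorph.trans_apply, N.symm_apply_apply] at hk
    exact (g k).injective (Subtype.ext (hk.trans (ha k).symm))
  · rw [Homeomorph.trans_apply, N.symm_apply_apply, ha]
  · calc (N (ψ (N.symm x)) : ℂ) = 0
      _ ↔ N.symm x = z := (hN₀ _).trans (hψz _)
      _ ↔ (x : ℂ) = 0 := by rw [← hN₀, N.apply_symm_apply]

theorem eq_of_apply_eq_of_norm_lt_one (h : IsRotationLimit g θ θ' ψ)
    (hθ' : ∀ n : ℕ, n ≠ 0 → exp ((n * θ' : ℝ) * I) ≠ 1) (ha : ∀ k, (g k a : ℂ) = 0)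
    (hψ : Function.Injective ψ) {F : ℂ → ℂ} {A : ℂ →L[ℝ] ℂ}
    (hF : Function.Semiconj ((↑) : Disk → ℂ) ψ F) (hF' : HasFDerivAt F A z) (hA : A.det = 1)
    (hz : ‖(z : ℂ)‖ < 1) (hfix : ψ z = z) : z = a := by
  by_cases hfixed : ∃ v ≠ 0, A v = v
  · obtain ⟨v, hv, hAv⟩ := hfixed
    exact h.eq_of_apply_eq_of_fixed_vector hθ' ha hψ hF hF' hA hz hfix hv hAv
  · push Not at hfixed
    exact h.eq_of_hasFDerivAt_of_apply_eq (by simpa using hθ' 1 one_ne_zero) ha hF hF'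
      (fun v hAv => by_contra fun hv => hfixed v hv hAv) hz hfix

end IsRotationLimit

/-! ### Periodic points -/

theorem isRotationLimit_of_tendstoUniformlyOn {φ : SmoothDiskDiffeo} {g : ℕ → SmoothDiskDiffeo}
    {θ : ℕ → ℝ} {θ' : ℝ} (hθ : Tendsto θ atTop (𝓝 θ'))
    (h : TendstoUniformlyOn (fun k z => (g k).invFun (exp (θ k * I) * (g k).toFun z))
      φ.toFun atTop Disk) :
    IsRotationLimit (fun k => (g k).toHomeomorph) θ θ' φ.toHomeomorph where
  preservesCircle k := (g k).preservesCircle_toHomeomorph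
  tendsto_angle := hθ
  tendsto := by
    rw [ContinuousMap.tendsto_iff_tendstoUniformly, Metric.tendstoUniformly_iff]
    intro ε hε
    filter_upwards [Metric.tendstoUniformlyOn_iff.1 h ε hε] with k hk x using hk x x.2

theorem exp_natCast_mul_two_pi_mul_ne_one {α : ℝ} (hα : Irrational α) {n : ℕ} (hn : n ≠ 0) :
    exp ((n * (2 * π * α) : ℝ) * I) ≠ 1 := by
  rw [Ne, exp_eq_one_iff]
  rintro ⟨m, hm⟩
  refine (hα.natCast_mul hn).ne_int m (ofReal_injective (mul_right_cancel₀ two_pi_I_ne_zero ?_))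
  push_cast at hm ⊢
  linear_combination hm

theorem IsRotationLimit.eq_of_iterate_eq {φ : SmoothDiskDiffeo} (hφ : AreaPreserving φ)
    {g : ℕ → Disk ≃ₜ Disk} {θ : ℕ → ℝ} {α : ℝ} (hα : Irrational α)
    (h : IsRotationLimit g θ (2 * π * α) φ.toHomeomorph) {a z : Disk}
    (ha : ∀ k, (g k a : ℂ) = 0) {n : ℕ} (hn : n ≠ 0) (hfix : φ.toHomeomorph^[n] z = z) :
    z = a := by
  have hangle (m : ℕ) (hm : m ≠ 0) : exp ((m * (n * (2 * π * α)) : ℝ) * I) ≠ 1 := by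
    simpa [mul_assoc] using exp_natCast_mul_two_pi_mul_ne_one hα (mul_ne_zero hm hn)
  rcases (norm_coe_le_one z).eq_or_lt with hz | hz
  · exact absurd hfix
      ((h.iterateMap n).apply_ne_of_norm_eq_one (exp_natCast_mul_two_pi_mul_ne_one hα hn) hz)
  · obtain ⟨A, hA, hdet⟩ := SmoothDiskDiffeo.exists_hasFDerivAt_iterate hφ n hz
    exact (h.iterateMap n).eq_of_apply_eq_of_norm_lt_one hangle ha
      (φ.toHomeomorph.injective.iterate n) (φ.semiconj_toHomeomorph.iterate_right n) hA hdet hz hfix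

theorem limit_of_periodic_is_pseudorotation_general (φ : SmoothDiskDiffeo)
    (harea : AreaPreserving φ) (g : ℕ → SmoothDiskDiffeo) (r : ℕ → ℝ) (α : ℝ)
    (hirr : Irrational α) (hconv_r : Tendsto r atTop (𝓝 α)) (hg0 : ∀ k, (g k).toFun 0 = 0)
    (hconv : TendstoUniformlyOn
      (fun k z => (g k).invFun (exp ((2 * π * r k) * I) * (g k).toFun z)) φ.toFun atTop Disk) :
    φ.toFun 0 = 0 ∧ ∀ z ∈ Disk, (∃ n : ℕ, 1 ≤ n ∧ φ.toFun^[n] z = z) → z = 0 := by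
  have hlim : IsRotationLimit (fun k => (g k).toHomeomorph) (fun k => 2 * π * r k) (2 * π * α)
      φ.toHomeomorph :=
    isRotationLimit_of_tendstoUniformlyOn (hconv_r.const_mul _) (by simpa using hconv)
  let o : Disk := ⟨0, mem_closedBall_self zero_le_one⟩
  refine ⟨congrArg Subtype.val (hlim.apply_eq_of_forall_apply_eq_zero (a := o) hg0), ?_⟩
  rintro z hz ⟨n, hn, hfix⟩
  lift z to Disk using hz
  refine congrArg Subtype.val (hlim.eq_of_iterate_eq harea hirr (a := o) hg0
    (Nat.one_le_iff_ne_zero.1 hn) (Subtype.ext ?_))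
  rw [φ.semiconj_toHomeomorph.iterate_right n z, hfix]

/-- If a smooth area-preserving diffeomorphism `φ` of the closed disk is a `C⁰`-limit of
maps `φ_k = g_k⁻¹ ∘ R_{2π p_k/q_k} ∘ g_k`, with `g_k` orientation-preserving smooth
diffeomorphisms fixing the origin and `p_k/q_k` converging to an irrational number,
then `φ` has precisely one periodic point, namely the origin; in particular `φ` is an
irrational pseudo-rotation. -/
theorem limit_of_periodic_is_pseudorotation (φ : SmoothDiskDiffeo)
    (harea : AreaPreserving φ)
    (g : ℕ → SmoothDiskDiffeo) (r : ℕ → ℚ) (α : ℝ)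
    (hirr : Irrational α)
    (hconv_r : Tendsto (fun k => (r k : ℝ)) atTop (nhds α))
    (hg0 : ∀ k, (g k).toFun 0 = 0)
    (hgor : ∀ k, OrientationPreserving (g k))
    (hconv : TendstoUniformlyOn
      (fun k z => (g k).invFun
        (Complex.exp ((2 * Real.pi * (r k : ℝ)) * Complex.I) * (g k).toFun z))
      φ.toFun atTop Disk) :
    φ.toFun 0 = 0 ∧
      ∀ z ∈ Disk, (∃ n : ℕ, 1 ≤ n ∧ φ.toFun^[n] z = z) → z = 0 :=
  limit_of_periodic_is_pseudorotation_general φ harea g (fun k => r k) α hirr hconv_r hg0 hconv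
end

section
/- Fix n ≥ 1 and a Hamiltonian H as in the context. Let a, τ : [0,∞)×ℝ → ℝ and z : [0,∞)×ℝ → D be C^∞ maps satisfying: (periodicity) a(s,t+n) = a(s,t), τ(s,t+n) = τ(s,t)+n, z(s,t+n) = z(s,t); (Cauchy–Riemann part) ∂_s a = ∂_t τ and ∂_t a = −∂_s τ; (disk part) (∂_t a)·X_H(τ,z) + ∂_s z + i·(∂_t z − (∂_t τ)·X_H(τ,z)) = 0; (boundary) a(0,t) = c and |z(0,t)| = 1 for all t, for some constant c ∈ ℝ. If the λ-energy E_λ := sup_ψ ∫_0^∞ ∫_0^n ψ(a(s,t))·(∂_s a·∂_t τ − ∂_t a·∂_s τ)(s,t) dt ds is finite, where the supremum is over all C^∞ functions ψ : ℝ → [0,∞) with ∫_ℝ ψ = 1, then the first partial derivatives of a (equivalently, of τ) are bounded on [0,∞)×ℝ. -/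
open Complex Set MeasureTheory ENNReal

/-- The Hamiltonian vector field `X_H(t,z) = (−∂_y H, ∂_x H)`, written in complex
notation as `i · (∂_x H + i ∂_y H)`. -/
noncomputable def XH (H : ℝ → ℂ → ℝ) (t : ℝ) (w : ℂ) : ℂ :=
  Complex.I * ((fderiv ℝ (H t) w 1 : ℝ) + (fderiv ℝ (H t) w Complex.I : ℝ) * Complex.I)

/-- Admissible Hamiltonians: smooth, 1-periodic in time, constant on the boundary circle. -/
structure IsAdmissible (H : ℝ → ℂ → ℝ) : Prop where
  smooth : ContDiff ℝ (⊤ : ℕ∞) (fun p : ℝ × ℂ => H p.1 p.2)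
  periodic : ∀ (t : ℝ) (z : ℂ), H (t + 1) z = H t z
  bdry_const : ∀ (t : ℝ), ∀ z w : ℂ, ‖z‖ = 1 → ‖w‖ = 1 → H t z = H t w

/-- The half cylinder `[0,∞) × ℝ`. -/
def HalfPlane : Set (ℝ × ℝ) := Set.Ici (0:ℝ) ×ˢ Set.univ

/-- Partial derivative in the `s`-direction, taken within a set `A`. -/
noncomputable def pds {E : Type*} [NormedAddCommGroup E] [NormedSpace ℝ E]
    (A : Set (ℝ × ℝ)) (f : ℝ × ℝ → E) (p : ℝ × ℝ) : E :=
  fderivWithin ℝ f A p (1, 0)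

/-- Partial derivative in the `t`-direction, taken within a set `A`. -/
noncomputable def pdt {E : Type*} [NormedAddCommGroup E] [NormedSpace ℝ E]
    (A : Set (ℝ × ℝ)) (f : ℝ × ℝ → E) (p : ℝ × ℝ) : E :=
  fderivWithin ℝ f A p (0, 1)

/-- The `λ`-energy of a half cylinder of period `n`:
`E_λ = sup_ψ ∫_0^∞ ∫_0^n ψ(a) (∂_s a ∂_t τ − ∂_t a ∂_s τ) dt ds`, the supremum over all
smooth `ψ : ℝ → [0,∞)` with `∫ ψ = 1`. -/
noncomputable def lambdaEnergy (n : ℕ) (a τ : ℝ × ℝ → ℝ) : ℝ≥0∞ :=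
  ⨆ ψ ∈ {ψ : ℝ → ℝ | ContDiff ℝ (⊤ : ℕ∞) ψ ∧ (∀ x, 0 ≤ ψ x) ∧ ∫ x : ℝ, ψ x = 1},
    ∫⁻ p in Set.Ici (0:ℝ) ×ˢ Set.Ioc (0:ℝ) (n:ℝ),
      ENNReal.ofReal (ψ (a p) *
        (pds HalfPlane a p * pdt HalfPlane τ p - pdt HalfPlane a p * pds HalfPlane τ p))

/-!
By the Cauchy–Riemann equations `F = a + iτ` is holomorphic, and the density of the `λ`-energy is
`ψ(a) * ‖F'‖ ^ 2`. Hofer's lemma and the Schwarz lemma, applied to `F'` near `w₀`, give a disk of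
radius `ρ ≤ 1/2` on which `‖F'‖` is comparable to a constant `K` with `ρ * K ≳ ‖F' w₀‖`. On this
disk `a` oscillates by `O(K * ρ)`, so some `ψ` of integral one is `≳ 1 / (K * ρ)` on all its values
there, and the disk contributes `≳ K ^ 2 * ρ ^ 2 / (K * ρ) = K * ρ` to the energy. This bounds
`‖F'‖` away from the boundary line `s = 0`; near it, periodicity and compactness suffice.
-/

open Metric

section General

lemma inv_measureReal_closedBall_le_normed {E : Type*} [NormedAddCommGroup E] [NormedSpace ℝ E]
    [HasContDiffBump E] [FiniteDimensional ℝ E] [MeasurableSpace E] [BorelSpace E]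
    {μ : Measure E} [IsLocallyFiniteMeasure μ] [μ.IsOpenPosMeasure] {c : E} (φ : ContDiffBump c)
    {x : E} (hx : x ∈ closedBall c φ.rIn) :
    (μ.real (closedBall c φ.rOut))⁻¹ ≤ φ.normed μ x := by
  rw [φ.normed_def, φ.one_of_mem_closedBall hx, one_div]
  exact inv_anti₀ φ.integral_pos (φ.integral_le_measure_closedBall μ)

lemma exists_contDiff_integral_eq_one_inv_le (x₀ : ℝ) {L : ℝ} (hL : 0 < L) :
    ∃ ψ : ℝ → ℝ, (ContDiff ℝ (⊤ : ℕ∞) ψ ∧ (∀ x, 0 ≤ ψ x) ∧ ∫ x, ψ x = 1) ∧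
      ∀ x ∈ closedBall x₀ L, (4 * L)⁻¹ ≤ ψ x := by
  let φ : ContDiffBump x₀ := ⟨L, 2 * L, hL, by linarith⟩
  refine ⟨φ.normed volume, ⟨φ.contDiff_normed, φ.nonneg_normed, φ.integral_normed⟩, fun x hx => ?_⟩
  have hvol : volume.real (closedBall x₀ φ.rOut) = 4 * L := by
    rw [Real.volume_real_closedBall (by positivity)]
    ring
  exact hvol ▸ inv_measureReal_closedBall_le_normed φ hx

lemma exists_closedBall_subset_le_two_mul {X : Type*} [MetricSpace X] [CompleteSpace X]
    {g : X → ℝ} {x : X} {r : ℝ} (hr : 0 < r) (hg : ContinuousOn g (closedBall x r))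
    (hg₀ : ∀ y ∈ closedBall x r, 0 ≤ g y) :
    ∃ (y : X) (δ : ℝ), 0 < δ ∧ δ ≤ r ∧ closedBall y δ ⊆ closedBall x r ∧
      r * g x ≤ 3 * (δ * g y) ∧ ∀ z ∈ closedBall y δ, g z ≤ 2 * g y := by
  have : CompleteSpace (closedBall x r) := isClosed_closedBall.completeSpace_coe
  obtain ⟨δ, hδ, y, hδr, hyx, hgy, hy⟩ := hofer (⟨x, mem_closedBall_self hr.le⟩ : closedBall x r)
    (r / 3) (by positivity) hg.domRestrict fun z => hg₀ z z.2
  have hsub : closedBall (y : X) δ ⊆ closedBall x r :=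
    closedBall_subset_closedBall' (by linarith [Subtype.dist_eq y ⟨x, mem_closedBall_self hr.le⟩])
  simp only [domRestrict_apply] at hgy hy
  exact ⟨y, δ, hδ, by linarith, hsub, by linarith,
    fun z hz => hy ⟨z, hsub hz⟩ (by rwa [Subtype.dist_eq, dist_comm])⟩

section Holomorphic

variable {E : Type*} [NormedAddCommGroup E] [NormedSpace ℂ E] {f : ℂ → E}

lemma half_norm_le_norm_of_norm_le_two_mul {w : ℂ} {δ : ℝ} (hf : DifferentiableOn ℂ f (ball w δ))
    (hδ : 0 < δ) (hle : ∀ z ∈ ball w δ, ‖f z‖ ≤ 2 * ‖f w‖) {z : ℂ}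
    (hz : z ∈ closedBall w (δ / 6)) : ‖f w‖ / 2 ≤ ‖f z‖ := by
  have hmaps : MapsTo f (ball w δ) (closedBall (f w) (3 * ‖f w‖)) := fun x hx => by
    rw [mem_closedBall_iff_norm]
    linarith [norm_sub_le (f x) (f w), hle x hx]
  have hdist : dist (f z) (f w) ≤ ‖f w‖ / 2 := calc
    dist (f z) (f w) ≤ 3 * ‖f w‖ / δ * dist z w :=
      dist_le_div_mul_dist_of_mapsTo_ball hf hmaps (closedBall_subset_ball (by linarith) hz)
    _ ≤ 3 * ‖f w‖ / δ * (δ / 6) := by gcongr; exact hz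
    _ = ‖f w‖ / 2 := by field
  rw [dist_eq_norm'] at hdist
  linarith [norm_sub_norm_le (f w) (f z)]

lemma exists_closedBall_norm_comparable {w₀ : ℂ} {r : ℝ} (hr : 0 < r)
    (hf : DiffContOnCl ℂ f (ball w₀ r)) :
    ∃ (w₁ : ℂ) (ρ : ℝ), 0 < ρ ∧ ρ ≤ r ∧ closedBall w₁ ρ ⊆ closedBall w₀ r ∧
      r * ‖f w₀‖ ≤ 18 * (ρ * ‖f w₁‖) ∧
      ∀ w ∈ closedBall w₁ ρ, ‖f w₁‖ / 2 ≤ ‖f w‖ ∧ ‖f w‖ ≤ 2 * ‖f w₁‖ := by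
  have hcont : ContinuousOn (fun w => ‖f w‖) (closedBall w₀ r) := hf.continuousOn_ball.norm
  obtain ⟨w₁, δ, hδ, hδr, hsub, hmul, htwo⟩ :=
    exists_closedBall_subset_le_two_mul hr hcont fun _ _ => norm_nonneg _
  have hball : ball w₁ δ ⊆ ball w₀ r :=
    interior_closedBall w₀ hr.ne' ▸ interior_maximal (ball_subset_closedBall.trans hsub) isOpen_ball
  have hδ6 : closedBall w₁ (δ / 6) ⊆ closedBall w₁ δ := closedBall_subset_closedBall (by linarith)
  refine ⟨w₁, δ / 6, by positivity, by linarith, hδ6.trans hsub, by linarith, fun w hw => ⟨?_, ?_⟩⟩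
  · exact half_norm_le_norm_of_norm_le_two_mul (hf.differentiableOn.mono hball) hδ
      (fun z hz => htwo z (ball_subset_closedBall hz)) hw
  · exact htwo w (hδ6 hw)

end Holomorphic

lemma exists_Ioc_subset_Ioc_int_mul {T ℓ : ℝ} (hℓ : 0 < ℓ) (hT : 2 * ℓ ≤ T) (x : ℝ) :
    ∃ (k : ℤ) (y : ℝ), x ∈ Icc y (y + ℓ) ∧ Ioc y (y + ℓ) ⊆ Ioc (k * T) (k * T + T) := by
  have hT₀ : 0 < T := by linarith
  obtain ⟨hk₁, hk₂⟩ := sub_toIocDiv_zsmul_mem_Ioc hT₀ 0 x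
  rw [zsmul_eq_mul] at hk₁ hk₂
  set k := toIocDiv hT₀ 0 x
  rcases le_total (x - k * T) ℓ with h | h
  · exact ⟨k, x, ⟨le_rfl, by linarith⟩, Ioc_subset_Ioc (by linarith) (by linarith)⟩
  · exact ⟨k, x - ℓ, ⟨by linarith, by linarith⟩, Ioc_subset_Ioc (by linarith) (by linarith)⟩

lemma mk_mem_closedBall {w : ℂ} {x y δ ε : ℝ} (hx : dist x w.re ≤ δ) (hy : dist y w.im ≤ ε) :
    (⟨x, y⟩ : ℂ) ∈ closedBall w (δ + ε) := by
  rw [mem_closedBall_iff_norm]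
  exact (norm_le_abs_re_add_abs_im _).trans (add_le_add hx hy)

end General

section QuasiPeriodic

/-- Maps on the half plane that change by the constant `c` under the translation `t ↦ t + T`;
`c = 0` is `T`-periodicity in `t`. Values off the half plane are unconstrained. -/
def IsQuasiPeriodic {E : Type*} [Add E] (f : ℝ × ℝ → E) (T : ℝ) (c : E) : Prop :=
  ∀ s t : ℝ, 0 ≤ s → f (s, t + T) = f (s, t) + c

variable {E : Type*} {T : ℝ}

lemma mem_halfPlane {p : ℝ × ℝ} : p ∈ HalfPlane ↔ 0 ≤ p.1 := by
  simp [HalfPlane]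

lemma uniqueDiffOn_halfPlane : UniqueDiffOn ℝ HalfPlane :=
  (uniqueDiffOn_Ici 0).prod uniqueDiffOn_univ

lemma halfPlane_mem_nhds {p : ℝ × ℝ} (hp : 0 < p.1) : HalfPlane ∈ nhds p :=
  prod_mem_nhds (Ici_mem_nhds hp) Filter.univ_mem

lemma IsQuasiPeriodic.map_add [Add E] {f : ℝ × ℝ → E} {c : E} (hf : IsQuasiPeriodic f T c)
    {p : ℝ × ℝ} (hp : p ∈ HalfPlane) : f (p + (0, T)) = f p + c := by
  obtain ⟨s, t⟩ := p
  simpa only [Prod.mk_add_mk, add_zero] using hf s t (mem_halfPlane.1 hp)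

lemma IsQuasiPeriodic.int_mul [AddGroup E] {f : ℝ × ℝ → E} {c : E}
    (hf : IsQuasiPeriodic f T c) (k : ℤ) : IsQuasiPeriodic f (k * T) (k • c) := fun s t hs => by
  let g : AddConstMap ℝ E T c := ⟨fun t => f (s, t), fun t => hf s t hs⟩
  simpa only [zsmul_eq_mul] using! AddConstMapClass.map_add_zsmul g t k

open scoped Pointwise in
lemma vadd_halfPlane (T : ℝ) : ((0, T) : ℝ × ℝ) +ᵥ HalfPlane = HalfPlane := by
  ext p
  simp [mem_vadd_set_iff_neg_vadd_mem, mem_halfPlane]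

lemma IsQuasiPeriodic.periodic_fderivWithin [NormedAddCommGroup E] [NormedSpace ℝ E]
    {f : ℝ × ℝ → E} {c : E} (hf : IsQuasiPeriodic f T c) :
    IsQuasiPeriodic (fderivWithin ℝ f HalfPlane) T 0 := by
  intro s t hs
  have hst : (s, t) ∈ HalfPlane := mem_halfPlane.2 hs
  calc fderivWithin ℝ f HalfPlane (s, t + T)
      = fderivWithin ℝ f HalfPlane ((s, t) + (0, T)) := by simp
    _ = fderivWithin ℝ (fun p => f (p + (0, T))) HalfPlane (s, t) := by
      rw [fderivWithin_comp_add_right, vadd_halfPlane]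
    _ = fderivWithin ℝ (fun p => f p + c) HalfPlane (s, t) :=
      fderivWithin_congr (fun _ => hf.map_add) (hf.map_add hst)
    _ = fderivWithin ℝ f HalfPlane (s, t) + 0 := by
      rw [fderivWithin_add_const, add_zero]

lemma IsQuasiPeriodic.exists_norm_le [NormedAddCommGroup E] {f : ℝ × ℝ → E}
    (hf : IsQuasiPeriodic f T 0) (hT : 0 < T) (hcont : ContinuousOn f HalfPlane) (R : ℝ) :
    ∃ C, ∀ s t : ℝ, 0 ≤ s → s ≤ R → ‖f (s, t)‖ ≤ C := by
  have hK : Icc 0 R ×ˢ Icc 0 T ⊆ HalfPlane := fun p hp => mem_halfPlane.2 hp.1.1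
  obtain ⟨C, hC⟩ :=
    (isCompact_Icc.prod isCompact_Icc).exists_bound_of_continuousOn (hcont.mono hK)
  refine ⟨C, fun s t hs hsR => ?_⟩
  obtain ⟨k, hk, -⟩ := existsUnique_add_zsmul_mem_Ioc hT t 0
  rw [zsmul_eq_mul, zero_add] at hk
  have hfk : f (s, t + k * T) = f (s, t) := by simpa using hf.int_mul k s t hs
  exact hfk ▸ hC _ ⟨⟨hs, hsR⟩, Ioc_subset_Icc_self hk⟩

end QuasiPeriodic

section LambdaEnergy

/-- The Jacobian determinant of `(a, τ)` with respect to `(s, t)`: the density of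
`da ∧ dτ` that `lambdaEnergy` weighs by `ψ ∘ a`. -/
noncomputable def jacobian (a τ : ℝ × ℝ → ℝ) (p : ℝ × ℝ) : ℝ :=
  pds HalfPlane a p * pdt HalfPlane τ p - pdt HalfPlane a p * pds HalfPlane τ p

variable {n : ℕ} {a τ : ℝ × ℝ → ℝ} {α β : ℝ} {S : Set (ℝ × ℝ)} {x₀ L : ℝ}

lemma IsQuasiPeriodic.periodic_jacobian {T : ℝ} (ha : IsQuasiPeriodic a T α)
    (hτ : IsQuasiPeriodic τ T β) :
    IsQuasiPeriodic (jacobian a τ) T 0 := fun s t hs => by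
  simp only [jacobian, pds, pdt, ha.periodic_fderivWithin s t hs,
    hτ.periodic_fderivWithin s t hs, add_zero]

lemma setLIntegral_jacobian_le_lambdaEnergy (hS : MeasurableSet S)
    (hsub : S ⊆ Ici 0 ×ˢ Ioc 0 (n : ℝ)) (hL : 0 < L) (haS : ∀ p ∈ S, a p ∈ closedBall x₀ L) :
    ∫⁻ p in S, ENNReal.ofReal (jacobian a τ p) ≤
      ENNReal.ofReal (4 * L) * lambdaEnergy n a τ := by
  obtain ⟨ψ, hψ, hψL⟩ := exists_contDiff_integral_eq_one_inv_le x₀ hL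
  have hdensity : ∀ p ∈ S, ENNReal.ofReal (jacobian a τ p) ≤
      ENNReal.ofReal (4 * L) * ENNReal.ofReal (ψ (a p) * jacobian a τ p) := fun p hp => by
    have hone : 1 ≤ 4 * L * ψ (a p) :=
      (inv_le_iff_one_le_mul₀' (by positivity)).1 (hψL _ (haS p hp))
    rw [ENNReal.ofReal_mul (hψ.2.1 _), ← mul_assoc, ← ENNReal.ofReal_mul (by positivity)]
    exact le_mul_of_one_le_left' (ENNReal.one_le_ofReal.2 hone)
  calc ∫⁻ p in S, ENNReal.ofReal (jacobian a τ p)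
      ≤ ∫⁻ p in S, ENNReal.ofReal (4 * L) * ENNReal.ofReal (ψ (a p) * jacobian a τ p) :=
        setLIntegral_mono' hS hdensity
    _ = ENNReal.ofReal (4 * L) * ∫⁻ p in S, ENNReal.ofReal (ψ (a p) * jacobian a τ p) :=
        lintegral_const_mul' _ _ ENNReal.ofReal_ne_top
    _ ≤ ENNReal.ofReal (4 * L) * lambdaEnergy n a τ := by
        gcongr
        exact (lintegral_mono_set hsub).trans (le_iSup₂_of_le ψ hψ le_rfl)

lemma setLIntegral_jacobian_le_lambdaEnergy_of_isQuasiPeriodic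
    (ha : IsQuasiPeriodic a n α) (hτ : IsQuasiPeriodic τ n β) (k : ℤ) (hS : MeasurableSet S)
    (hsub : S ⊆ Ici 0 ×ˢ Ioc (k * n : ℝ) (k * n + n)) (hL : 0 < L)
    (haS : ∀ p ∈ S, a p ∈ closedBall x₀ L) :
    ∫⁻ p in S, ENNReal.ofReal (jacobian a τ p) ≤
      ENNReal.ofReal (4 * L) * lambdaEnergy n a τ := by
  let v : ℝ × ℝ := (0, k * n)
  have hmeas : MeasurableSet ((· + v) ⁻¹' S) := measurable_add_const v hS
  have hstrip : (· + v) ⁻¹' S ⊆ Ici 0 ×ˢ Ioc 0 (n : ℝ) := fun p hp => by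
    obtain ⟨hs, ht₁, ht₂⟩ := hsub hp
    simp only [v, Prod.fst_add, Prod.snd_add, add_zero] at hs ht₁ ht₂
    exact ⟨hs, by linarith, by linarith⟩
  have hshift : ∀ p ∈ (· + v) ⁻¹' S, a p ∈ closedBall (x₀ - k • α) L ∧
      jacobian a τ (p + v) = jacobian a τ p := fun p hp => by
    have hpH : p ∈ HalfPlane := mem_halfPlane.2 (hstrip hp).1
    have hav : a (p + v) = a p + k • α := (ha.int_mul k).map_add hpH
    have hball : a (p + v) ∈ closedBall x₀ L := haS _ hp
    refine ⟨?_, by simpa using ((ha.periodic_jacobian hτ).int_mul k).map_add hpH⟩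
    rwa [hav, mem_closedBall, ← dist_sub_right _ _ (k • α), add_sub_cancel_right] at hball
  rw [← (measurePreserving_add_right volume v).setLIntegral_comp_preimage_emb
    (measurableEmbedding_addRight v), setLIntegral_congr_fun hmeas fun p hp => by
      rw [(hshift p hp).2]]
  exact setLIntegral_jacobian_le_lambdaEnergy hmeas hstrip hL fun p hp => (hshift p hp).1

end LambdaEnergy

section CauchyRiemann

/-- `C¹` functions on the half plane, up to its boundary, that satisfy the Cauchy–Riemann equations
with respect to `s + it`, i.e. for which `a + iτ` is holomorphic. -/
structure IsCauchyRiemannPair (a τ : ℝ × ℝ → ℝ) : Prop where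
  contDiffOn_fst : ContDiffOn ℝ 1 a HalfPlane
  contDiffOn_snd : ContDiffOn ℝ 1 τ HalfPlane
  pds_fst : ∀ p ∈ HalfPlane, pds HalfPlane a p = pdt HalfPlane τ p
  pdt_fst : ∀ p ∈ HalfPlane, pdt HalfPlane a p = -pds HalfPlane τ p

/-- The function `a + iτ` of the complex variable `s + it`. -/
noncomputable def complexMap (a τ : ℝ × ℝ → ℝ) (w : ℂ) : ℂ :=
  a (w.re, w.im) + τ (w.re, w.im) * I

/-- The derivative of `a + iτ` in the complex variable `s + it`, read off in the `s`-direction; it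
is kept a function on the half plane because it also makes sense on the boundary. -/
noncomputable def complexDeriv (a τ : ℝ × ℝ → ℝ) (p : ℝ × ℝ) : ℂ :=
  pds HalfPlane a p + pds HalfPlane τ p * I

variable {a τ : ℝ × ℝ → ℝ} {α β : ℝ}

lemma IsQuasiPeriodic.periodic_complexDeriv {T : ℝ} (ha : IsQuasiPeriodic a T α)
    (hτ : IsQuasiPeriodic τ T β) : IsQuasiPeriodic (complexDeriv a τ) T 0 := fun s t hs => by
  simp only [complexDeriv, pds, ha.periodic_fderivWithin s t hs, hτ.periodic_fderivWithin s t hs,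
    add_zero]

namespace IsCauchyRiemannPair

lemma continuousOn_complexDeriv (h : IsCauchyRiemannPair a τ) :
    ContinuousOn (complexDeriv a τ) HalfPlane := by
  have hpds {f : ℝ × ℝ → ℝ} (hf : ContDiffOn ℝ 1 f HalfPlane) :
      ContinuousOn (fun p => ((pds HalfPlane f p : ℝ) : ℂ)) HalfPlane :=
    continuous_ofReal.comp_continuousOn <|
      (hf.continuousOn_fderivWithin uniqueDiffOn_halfPlane le_rfl).clm_apply continuousOn_const
  exact (hpds h.contDiffOn_fst).add ((hpds h.contDiffOn_snd).mul continuousOn_const)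

lemma jacobian_eq (h : IsCauchyRiemannPair a τ) {p : ℝ × ℝ} (hp : p ∈ HalfPlane) :
    jacobian a τ p = ‖complexDeriv a τ p‖ ^ 2 := by
  rw [jacobian, ← h.pds_fst p hp, h.pdt_fst p hp, complexDeriv, Complex.sq_norm, normSq_add_mul_I]
  ring

lemma hasDerivAt_complexMap (h : IsCauchyRiemannPair a τ) {w : ℂ} (hw : 0 < w.re) :
    HasDerivAt (complexMap a τ) (complexDeriv a τ (w.re, w.im)) w := by
  have hp : (w.re, w.im) ∈ HalfPlane := mem_halfPlane.2 hw.le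
  have hreal {f : ℝ × ℝ → ℝ} (hf : ContDiffOn ℝ 1 f HalfPlane) :
      HasFDerivAt (fun w : ℂ => (f (w.re, w.im) : ℂ))
        (ofRealCLM ∘L fderivWithin ℝ f HalfPlane (w.re, w.im) ∘L
          (equivRealProdCLM : ℂ →L[ℝ] ℝ × ℝ)) w :=
    ofRealCLM.hasFDerivAt.comp w <|
      (((hf.differentiableOn one_ne_zero _ hp).hasFDerivWithinAt.hasFDerivAt
        (halfPlane_mem_nhds hw)).comp w equivRealProdCLM.hasFDerivAt :)
  have hF := (hreal h.contDiffOn_fst).add ((hreal h.contDiffOn_snd).mul_const I)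
  refine (hF.complexOfReal_hasFDerivAt ?_).hasDerivAt.congr_deriv ?_
  · have hCR₁ := h.pds_fst _ hp
    have hCR₂ := h.pdt_fst _ hp
    simp only [pds, pdt] at hCR₁ hCR₂
    simp [Complex.ext_iff, hCR₁, hCR₂]
  · simp [complexDeriv, pds, mul_comm I]

end IsCauchyRiemannPair

end CauchyRiemann

section Estimates

variable {n : ℕ} {a τ : ℝ × ℝ → ℝ} {α β : ℝ}

namespace IsCauchyRiemannPair

lemma differentiableOn_complexDeriv (h : IsCauchyRiemannPair a τ) :
    DifferentiableOn ℂ (fun w : ℂ => complexDeriv a τ (w.re, w.im)) {w | 0 < w.re} := by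
  have hmap : DifferentiableOn ℂ (complexMap a τ) {w | 0 < w.re} := fun w hw =>
    (h.hasDerivAt_complexMap hw).differentiableAt.differentiableWithinAt
  exact (hmap.deriv (isOpen_lt continuous_const continuous_re)).congr fun w hw =>
    (h.hasDerivAt_complexMap hw).deriv.symm

lemma dist_le_of_norm_complexDeriv_le (h : IsCauchyRiemannPair a τ) {w₁ w : ℂ} {ρ M : ℝ}
    (hsub : closedBall w₁ ρ ⊆ {w | 0 < w.re}) (hM : 0 ≤ M)
    (hle : ∀ w ∈ closedBall w₁ ρ, ‖complexDeriv a τ (w.re, w.im)‖ ≤ M)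
    (hw : w ∈ closedBall w₁ ρ) : dist (a (w.re, w.im)) (a (w₁.re, w₁.im)) ≤ M * ρ := by
  have hw₁ : w₁ ∈ closedBall w₁ ρ := mem_closedBall_self (dist_nonneg.trans hw)
  calc dist (a (w.re, w.im)) (a (w₁.re, w₁.im))
      = |(complexMap a τ w - complexMap a τ w₁).re| := by simp [complexMap, Real.dist_eq]
    _ ≤ ‖complexMap a τ w - complexMap a τ w₁‖ := abs_re_le_norm _
    _ ≤ M * ‖w - w₁‖ := (convex_closedBall w₁ ρ).norm_image_sub_le_of_norm_hasDerivWithin_le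
        (fun v hv => (h.hasDerivAt_complexMap (hsub hv)).hasDerivWithinAt) hle hw₁ hw
    _ ≤ M * ρ := by gcongr; exact mem_closedBall_iff_norm.1 hw

lemma ofReal_sq_mul_volume_le_setLIntegral_jacobian (h : IsCauchyRiemannPair a τ)
    {S : Set (ℝ × ℝ)} {m : ℝ} (hS : MeasurableSet S) (hsub : S ⊆ HalfPlane) (hm : 0 ≤ m)
    (hle : ∀ p ∈ S, m ≤ ‖complexDeriv a τ p‖) :
    ENNReal.ofReal (m ^ 2) * volume S ≤ ∫⁻ p in S, ENNReal.ofReal (jacobian a τ p) := by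
  rw [← setLIntegral_const]
  refine setLIntegral_mono' hS fun p hp => ENNReal.ofReal_le_ofReal ?_
  rw [h.jacobian_eq (hsub hp)]
  gcongr
  exact hle p hp

lemma sq_mul_le_lambdaEnergy (h : IsCauchyRiemannPair a τ) (ha : IsQuasiPeriodic a n α)
    (hτ : IsQuasiPeriodic τ n β) (hE : lambdaEnergy n a τ ≠ ⊤) {w₁ : ℂ} {ρ m M : ℝ}
    (hρ : 0 < ρ) (hρn : ρ ≤ n) (hsub : closedBall w₁ ρ ⊆ {w | 0 < w.re}) (hm : 0 ≤ m) (hM : 0 < M)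
    (hle : ∀ w ∈ closedBall w₁ ρ, m ≤ ‖complexDeriv a τ (w.re, w.im)‖ ∧
      ‖complexDeriv a τ (w.re, w.im)‖ ≤ M) :
    m ^ 2 * ρ ≤ 16 * M * (lambdaEnergy n a τ).toReal := by
  -- The square below has side `ρ / 2`, not `ρ`, so that it need not cross a period line.
  obtain ⟨k, y, hy, hstrip⟩ :=
    exists_Ioc_subset_Ioc_int_mul (half_pos hρ) (show 2 * (ρ / 2) ≤ n by linarith) w₁.im
  set Q : Set (ℝ × ℝ) := Ioc w₁.re (w₁.re + ρ / 2) ×ˢ Ioc y (y + ρ / 2)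
  have hQball : ∀ p ∈ Q, (⟨p.1, p.2⟩ : ℂ) ∈ closedBall w₁ ρ := fun p hp => by
    have hre : dist p.1 w₁.re ≤ ρ / 2 := by
      simpa using Real.dist_le_of_mem_Icc (Ioc_subset_Icc_self hp.1) ⟨le_rfl, by linarith⟩
    have him : dist p.2 w₁.im ≤ ρ / 2 := by
      simpa using Real.dist_le_of_mem_Icc (Ioc_subset_Icc_self hp.2) hy
    simpa only [add_halves] using mk_mem_closedBall hre him
  have hQmeas : MeasurableSet Q := measurableSet_Ioc.prod measurableSet_Ioc
  have hQpos : ∀ p ∈ Q, 0 ≤ p.1 := fun p hp => (hsub (hQball p hp)).le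
  have hQvol : volume Q = ENNReal.ofReal ((ρ / 2) ^ 2) := by
    simp only [Q, Measure.volume_eq_prod, Measure.prod_prod, Real.volume_Ioc, add_sub_cancel_left]
    rw [← ENNReal.ofReal_mul (by positivity), sq]
  have hlower := h.ofReal_sq_mul_volume_le_setLIntegral_jacobian hQmeas
    (fun p hp => mem_halfPlane.2 (hQpos p hp)) hm fun p hp => (hle _ (hQball p hp)).1
  have hupper := setLIntegral_jacobian_le_lambdaEnergy_of_isQuasiPeriodic ha hτ k hQmeas
    (fun p hp => ⟨hQpos p hp, hstrip hp.2⟩) (mul_pos hM hρ) fun p hp =>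
      h.dist_le_of_norm_complexDeriv_le hsub hM.le (fun w hw => (hle w hw).2) (hQball p hp)
  have hreal := ENNReal.toReal_mono (ENNReal.mul_ne_top ENNReal.ofReal_ne_top hE)
    (hlower.trans hupper)
  rw [hQvol, ENNReal.toReal_mul, ENNReal.toReal_mul, ENNReal.toReal_ofReal (by positivity),
    ENNReal.toReal_ofReal (by positivity), ENNReal.toReal_ofReal (by positivity)] at hreal
  refine le_of_mul_le_mul_right ?_ (by positivity : 0 < ρ / 4)
  linarith

lemma mul_norm_complexDeriv_le (h : IsCauchyRiemannPair a τ) (ha : IsQuasiPeriodic a n α)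
    (hτ : IsQuasiPeriodic τ n β) (hE : lambdaEnergy n a τ ≠ ⊤) {p : ℝ × ℝ} {r : ℝ} (hr : 0 < r)
    (hrp : r < p.1) (hrn : r ≤ n) :
    r * ‖complexDeriv a τ p‖ ≤ 2304 * (lambdaEnergy n a τ).toReal := by
  set f : ℂ → ℂ := fun w => complexDeriv a τ (w.re, w.im)
  have hball : closedBall (⟨p.1, p.2⟩ : ℂ) r ⊆ {w | 0 < w.re} := fun w hw => by
    have hre := (abs_re_le_norm _).trans (mem_closedBall_iff_norm.1 hw)
    simp only [sub_re] at hre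
    exact (sub_pos.2 hrp).trans_le (by linarith [neg_abs_le (w.re - p.1)])
  obtain ⟨w₁, ρ, hρ, hρr, hsub, hmul, hcomp⟩ := exists_closedBall_norm_comparable hr
    (h.differentiableOn_complexDeriv.diffContOnCl_ball hball)
  rcases (norm_nonneg (f w₁)).eq_or_lt with hzero | hpos
  · exact hmul.trans (by rw [← hzero]; simp)
  · have henergy := h.sq_mul_le_lambdaEnergy ha hτ hE hρ (hρr.trans hrn) (hsub.trans hball)
      (by positivity) (by positivity) hcomp
    have hcancel : ρ * ‖f w₁‖ ≤ 128 * (lambdaEnergy n a τ).toReal := by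
      refine le_of_mul_le_mul_right ?_ (by positivity : 0 < ‖f w₁‖ / 4)
      linarith
    linarith

lemma exists_norm_complexDeriv_le (h : IsCauchyRiemannPair a τ) (hn : 1 ≤ n)
    (ha : IsQuasiPeriodic a n α) (hτ : IsQuasiPeriodic τ n β) (hE : lambdaEnergy n a τ ≠ ⊤) :
    ∃ M, ∀ p ∈ HalfPlane, ‖complexDeriv a τ p‖ ≤ M := by
  have hn₁ : (1 : ℝ) ≤ n := by exact_mod_cast hn
  obtain ⟨C, hC⟩ := (ha.periodic_complexDeriv hτ).exists_norm_le (by linarith)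
    h.continuousOn_complexDeriv 1
  refine ⟨max C (2 * (2304 * (lambdaEnergy n a τ).toReal)), fun p hp => ?_⟩
  rcases le_total p.1 1 with hp₁ | hp₁
  · exact le_max_of_le_left (hC p.1 p.2 (mem_halfPlane.1 hp) hp₁)
  · have hfar := h.mul_norm_complexDeriv_le ha hτ hE one_half_pos
      (show 1 / 2 < p.1 by linarith) (by linarith)
    exact le_max_of_le_right (by linarith)

end IsCauchyRiemannPair

theorem grad_bound_of_finite_lambda_energy_general (hn : 1 ≤ n) (h : IsCauchyRiemannPair a τ)
    (ha : IsQuasiPeriodic a n α) (hτ : IsQuasiPeriodic τ n β) (hE : lambdaEnergy n a τ < ⊤) :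
    ∃ M : ℝ, ∀ p ∈ HalfPlane,
      |pds HalfPlane a p| ≤ M ∧ |pdt HalfPlane a p| ≤ M ∧
      |pds HalfPlane τ p| ≤ M ∧ |pdt HalfPlane τ p| ≤ M := by
  obtain ⟨M, hM⟩ := h.exists_norm_complexDeriv_le hn ha hτ hE.ne
  refine ⟨M, fun p hp => ?_⟩
  have hre : |pds HalfPlane a p| ≤ M := by
    simpa [complexDeriv] using (abs_re_le_norm _).trans (hM p hp)
  have him : |pds HalfPlane τ p| ≤ M := by
    simpa [complexDeriv] using (abs_im_le_norm _).trans (hM p hp)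
  exact ⟨hre, by rwa [h.pdt_fst p hp, abs_neg], him, by rwa [← h.pds_fst p hp]⟩

end Estimates

/-- **Finite `λ`-energy implies bounded gradient of `a` (equivalently of `τ`).** -/
theorem grad_bound_of_finite_lambda_energy
    (H : ℝ → ℂ → ℝ) (hH : IsAdmissible H) (n : ℕ) (hn : 1 ≤ n)
    (a τ : ℝ × ℝ → ℝ) (z : ℝ × ℝ → ℂ) (c : ℝ)
    (ha_smooth : ContDiffOn ℝ (⊤ : ℕ∞) a HalfPlane)
    (hτ_smooth : ContDiffOn ℝ (⊤ : ℕ∞) τ HalfPlane)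
    (hz_smooth : ContDiffOn ℝ (⊤ : ℕ∞) z HalfPlane)
    (hz_disk : ∀ p ∈ HalfPlane, z p ∈ Disk)
    (ha_per : ∀ s t : ℝ, 0 ≤ s → a (s, t + n) = a (s, t))
    (hτ_per : ∀ s t : ℝ, 0 ≤ s → τ (s, t + n) = τ (s, t) + n)
    (hz_per : ∀ s t : ℝ, 0 ≤ s → z (s, t + n) = z (s, t))
    (hCR₁ : ∀ p ∈ HalfPlane, pds HalfPlane a p = pdt HalfPlane τ p)
    (hCR₂ : ∀ p ∈ HalfPlane, pdt HalfPlane a p = -pds HalfPlane τ p)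
    (hdisk_eq : ∀ p ∈ HalfPlane,
      Complex.ofReal (pdt HalfPlane a p) * XH H (τ p) (z p) + pds HalfPlane z p +
        Complex.I * (pdt HalfPlane z p -
          Complex.ofReal (pdt HalfPlane τ p) * XH H (τ p) (z p)) = 0)
    (hbdry_a : ∀ t : ℝ, a (0, t) = c)
    (hbdry_z : ∀ t : ℝ, ‖z (0, t)‖ = 1)
    (hElambda : lambdaEnergy n a τ < ⊤) :
    ∃ M : ℝ, ∀ p ∈ HalfPlane,
      |pds HalfPlane a p| ≤ M ∧ |pdt HalfPlane a p| ≤ M ∧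
      |pds HalfPlane τ p| ≤ M ∧ |pdt HalfPlane τ p| ≤ M := by
  have h : IsCauchyRiemannPair a τ :=
    ⟨ha_smooth.of_le (by simp), hτ_smooth.of_le (by simp), hCR₁, hCR₂⟩
  exact grad_bound_of_finite_lambda_energy_general hn h
    (fun s t hs => (ha_per s t hs).trans (add_zero _).symm) hτ_per hElambda
end
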